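/- arXiv:1307.4709 — 4 statements merged into one kernel-verified Lean document; each statement's English description precedes it below -/
import Mathlib

section
/- Conforming upper bound (majorant): let ũ ∈ L²₋₁(Ω) have weak gradient ∇ũ ∈ L²(Ω;ℝ^N) with e := û − ũ ∈ H¹°₋₁(Ω). Then for every v ∈ L²(Ω;ℝ^N) possessing a weak divergence div v ∈ L²₊₁(Ω), ‖∇e‖_A ≤ M₊(∇ũ,v) := c_{N,α} ‖f + div v‖_{L²₊₁(Ω)} + ‖∇ũ − A^{−1}v‖_A. -/
open MeasureTheory Filter Topology
open scoped RealInnerProductSpace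

noncomputable section

/-- Euclidean space `ℝ^N`. -/
abbrev Euc (N : ℕ) := EuclideanSpace ℝ (Fin N)

/-- The Poincaré constant `c_N = 2/(N-2)`. -/
def cN (N : ℕ) : ℝ := 2 / ((N : ℝ) - 2)

variable {N : ℕ}

/-- Squared weighted `L²_s(Ω)` norm: `∫_Ω (1+|x|²)^s u(x)² dx`. -/
def sqL2 (Ω : Set (Euc N)) (s : ℝ) (u : Euc N → ℝ) : ℝ :=
  ∫ x in Ω, (1 + ‖x‖ ^ 2) ^ s * u x ^ 2

/-- Weighted `L²_s(Ω)` norm. -/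
def nrmL2 (Ω : Set (Euc N)) (s : ℝ) (u : Euc N → ℝ) : ℝ :=
  Real.sqrt (sqL2 Ω s u)

/-- Membership in the weighted space `L²_s(Ω)` (scalar functions). -/
def MemL2 (Ω : Set (Euc N)) (s : ℝ) (u : Euc N → ℝ) : Prop :=
  AEStronglyMeasurable u (volume.restrict Ω) ∧
    Integrable (fun x => (1 + ‖x‖ ^ 2) ^ s * u x ^ 2) (volume.restrict Ω)

/-- Squared weighted `L²_s(Ω;ℝ^N)` norm for vector fields. -/
def sqL2V (Ω : Set (Euc N)) (s : ℝ) (v : Euc N → Euc N) : ℝ :=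
  ∫ x in Ω, (1 + ‖x‖ ^ 2) ^ s * ‖v x‖ ^ 2

/-- Weighted `L²_s(Ω;ℝ^N)` norm for vector fields. -/
def nrmL2V (Ω : Set (Euc N)) (s : ℝ) (v : Euc N → Euc N) : ℝ :=
  Real.sqrt (sqL2V Ω s v)

/-- Membership in the weighted space `L²_s(Ω;ℝ^N)` (vector fields). -/
def MemL2V (Ω : Set (Euc N)) (s : ℝ) (v : Euc N → Euc N) : Prop :=
  AEStronglyMeasurable v (volume.restrict Ω) ∧
    Integrable (fun x => (1 + ‖x‖ ^ 2) ^ s * ‖v x‖ ^ 2) (volume.restrict Ω)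

/-- Test functions: `φ ∈ C_c^∞(Ω)`. -/
def IsTest (Ω : Set (Euc N)) (φ : Euc N → ℝ) : Prop :=
  ContDiff ℝ (⊤ : ℕ∞) φ ∧ HasCompactSupport φ ∧ tsupport φ ⊆ Ω

/-- `g` is the weak gradient of `u` on `Ω`:
`∫_Ω u ∇φ = −∫_Ω φ g` for all test functions `φ`. -/
def IsWeakGrad (Ω : Set (Euc N)) (u : Euc N → ℝ) (g : Euc N → Euc N) : Prop :=
  ∀ φ : Euc N → ℝ, IsTest Ω φ →
    (∫ x in Ω, u x • gradient φ x) = - ∫ x in Ω, φ x • g x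

/-- `d` is the weak divergence of the vector field `v` on `Ω`:
`∫_Ω v·∇φ = −∫_Ω d φ` for all test functions `φ`. -/
def IsWeakDiv (Ω : Set (Euc N)) (v : Euc N → Euc N) (d : Euc N → ℝ) : Prop :=
  ∀ φ : Euc N → ℝ, IsTest Ω φ →
    (∫ x in Ω, ⟪v x, gradient φ x⟫) = - ∫ x in Ω, d x * φ x

/-- `u ∈ H¹°₋₁(Ω)` with weak gradient `g`: `u ∈ L²₋₁(Ω)`, `g ∈ L²(Ω;ℝ^N)` is the weak
gradient of `u`, and `u` is approximated by test functions in the natural norms. -/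
def MemH10 (Ω : Set (Euc N)) (u : Euc N → ℝ) (g : Euc N → Euc N) : Prop :=
  MemL2 Ω (-1) u ∧ MemL2V Ω 0 g ∧ IsWeakGrad Ω u g ∧
    ∃ φ : ℕ → Euc N → ℝ, (∀ n, IsTest Ω (φ n)) ∧
      Tendsto (fun n => nrmL2 Ω (-1) (fun x => u x - φ n x)) atTop (𝓝 0) ∧
      Tendsto (fun n => nrmL2V Ω 0 (fun x => g x - gradient (φ n) x)) atTop (𝓝 0)

/-- `g ∈ 𝒢`, the closure in `L²(Ω;ℝ^N)` of `{∇φ : φ ∈ C_c^∞(Ω)}`. -/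
def MemG (Ω : Set (Euc N)) (g : Euc N → Euc N) : Prop :=
  MemL2V Ω 0 g ∧
    ∃ φ : ℕ → Euc N → ℝ, (∀ n, IsTest Ω (φ n)) ∧
      Tendsto (fun n => nrmL2V Ω 0 (fun x => g x - gradient (φ n) x)) atTop (𝓝 0)

/-- `ψ ∈ D₀`, the set of weakly divergence-free fields in `L²(Ω;ℝ^N)`. -/
def MemD0 (Ω : Set (Euc N)) (ψ : Euc N → Euc N) : Prop :=
  MemL2V Ω 0 ψ ∧
    ∀ φ : Euc N → ℝ, IsTest Ω φ → (∫ x in Ω, ⟪ψ x, gradient φ x⟫) = 0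

/-- The coefficient matrix field `A : Ω → ℝ^{N×N}`: measurable, essentially bounded,
symmetric, and uniformly coercive (`A(x)ξ·ξ ≥ α⁻²|ξ|²` for a.e. `x ∈ Ω`). -/
structure Coeff (N : ℕ) (Ω : Set (Euc N)) where
  A : Euc N → Euc N →L[ℝ] Euc N
  α : ℝ
  α_pos : 0 < α
  meas : ∀ ξ : Euc N, AEStronglyMeasurable (fun x => A x ξ) (volume.restrict Ω)
  bdd : ∃ C : ℝ, ∀ᵐ x ∂(volume.restrict Ω), ∀ ξ : Euc N, ‖A x ξ‖ ≤ C * ‖ξ‖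
  symm : ∀ x : Euc N, ∀ ξ η : Euc N, ⟪A x ξ, η⟫ = ⟪ξ, A x η⟫
  coer : ∀ᵐ x ∂(volume.restrict Ω), ∀ ξ : Euc N, α⁻¹ ^ 2 * ‖ξ‖ ^ 2 ≤ ⟪A x ξ, ξ⟫

/-- The weighted inner product `⟨v,w⟩_A = ∫_Ω A v · w dx`. -/
def ipA (Ω : Set (Euc N)) (A : Euc N → Euc N →L[ℝ] Euc N) (v w : Euc N → Euc N) : ℝ :=
  ∫ x in Ω, ⟪A x (v x), w x⟫

/-- The squared `A`-weighted norm `‖v‖²_A = ∫_Ω A v · v dx`. -/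
def sqA (Ω : Set (Euc N)) (A : Euc N → Euc N →L[ℝ] Euc N) (v : Euc N → Euc N) : ℝ :=
  ipA Ω A v v

/-- The `A`-weighted norm `‖v‖_A`. -/
def nrmA (Ω : Set (Euc N)) (A : Euc N → Euc N →L[ℝ] Euc N) (v : Euc N → Euc N) : ℝ :=
  Real.sqrt (sqA Ω A v)

/-- `w = A⁻¹ v` (a.e. on `Ω`), with `w ∈ L²(Ω;ℝ^N)`. -/
def IsAInv (Ω : Set (Euc N)) (A : Euc N → Euc N →L[ℝ] Euc N) (v w : Euc N → Euc N) : Prop :=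
  MemL2V Ω 0 w ∧ ∀ᵐ x ∂(volume.restrict Ω), A x (w x) = v x

lemma integral_fderiv_zero {ψ : Euc N → ℝ} (h : ContDiff ℝ 1 ψ) (hc : HasCompactSupport ψ)
    (v : Euc N) : ∫ x, fderiv ℝ ψ x v = 0 := by
  have h1 : Continuous (fun x => fderiv ℝ ψ x v) :=
    (h.continuous_fderiv (by norm_num)).clm_apply continuous_const
  have := integral_mul_fderiv_eq_neg_fderiv_mul_of_integrable (𝕜 := ℝ)
    (μ := (volume : Measure (Euc N))) (f := fun _ => (1:ℝ)) (g := ψ) (v := v)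
    (by simp) (by
      simpa using h1.integrable_of_hasCompactSupport (hc.fderiv_apply (𝕜 := ℝ) v))
    (by simpa using h.continuous.integrable_of_hasCompactSupport hc)
    (fun x _ => by fun_prop) (fun x _ => (h.differentiable (by norm_num)).differentiableAt)
  simpa using this

lemma inner_gradient (φ : Euc N → ℝ) (x y : Euc N) :
    ⟪gradient φ x, y⟫ = fderiv ℝ φ x y := by
  rw [← toDual_gradient]; rfl

lemma gradient_cont {Ω : Set (Euc N)} {φ : Euc N → ℝ} (h : IsTest Ω φ) :
    Continuous (gradient φ) :=
  (InnerProductSpace.toDual ℝ (Euc N)).symm.continuous.comp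
    (h.1.continuous_fderiv (by simp))

lemma gradient_supp {Ω : Set (Euc N)} {φ : Euc N → ℝ} (h : IsTest Ω φ) :
    HasCompactSupport (gradient φ) :=
  (h.2.1.fderiv (𝕜 := ℝ)).comp_left (g := (InnerProductSpace.toDual ℝ (Euc N)).symm) (by simp)

lemma gradient_zero {Ω : Set (Euc N)} {φ : Euc N → ℝ} (h : IsTest Ω φ) {x : Euc N}
    (hx : x ∉ Ω) : gradient φ x = 0 := by
  have : fderiv ℝ φ x = 0 := by
    by_contra hne
    exact hx (h.2.2 (support_fderiv_subset ℝ (f := φ) hne))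
  simp [gradient, this]

lemma test_zero {Ω : Set (Euc N)} {φ : Euc N → ℝ} (h : IsTest Ω φ) {x : Euc N}
    (hx : x ∉ Ω) : φ x = 0 := by
  by_contra hne
  exact hx (h.2.2 (subset_tsupport _ hne))

lemma div_id (φ : Euc N → ℝ) (h : ContDiff ℝ 1 φ) (hc : HasCompactSupport φ) :
    ∫ x : Euc N, (2 * φ x * (fderiv ℝ φ x x) / (1 + ‖x‖^2)
      + φ x ^ 2 * (N / (1 + ‖x‖^2) - 2 * ‖x‖^2 / (1 + ‖x‖^2)^2)) = 0 := by
  have hpos : ∀ x : Euc N, (1 + ‖x‖^2) ≠ 0 := fun x => by positivity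
  let ψ : Fin N → Euc N → ℝ := fun i x => φ x ^ 2 * (x i * (1 + ‖x‖^2)⁻¹)
  have hψ : ∀ i, ContDiff ℝ 1 (ψ i) := by
    intro i
    refine (h.pow 2).mul (ContDiff.mul ?_ (ContDiff.inv ?_ hpos))
    · exact (EuclideanSpace.proj (𝕜 := ℝ) i).contDiff
    · exact contDiff_const.add (contDiff_norm_sq ℝ)
  have hψc : ∀ i, HasCompactSupport (ψ i) := by
    intro i
    refine HasCompactSupport.mul_right ?_
    exact hc.comp_left (g := fun t : ℝ => t ^ 2) (by simp)
  have hd : ∀ i x, fderiv ℝ (ψ i) x (EuclideanSpace.single i 1) =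
      2 * φ x * (fderiv ℝ φ x (x i • EuclideanSpace.single i 1)) / (1 + ‖x‖^2)
      + φ x ^ 2 * (1 / (1 + ‖x‖^2) - 2 * (x i)^2 / (1 + ‖x‖^2)^2) := by
    intro i x
    have h1 := ((h.differentiable (by norm_num)).differentiableAt (x := x)).hasFDerivAt
    have h2 : HasFDerivAt (fun x : Euc N => x i) (EuclideanSpace.proj (𝕜 := ℝ) i : Euc N →L[ℝ] ℝ) x :=
      (EuclideanSpace.proj (𝕜 := ℝ) i : Euc N →L[ℝ] ℝ).hasFDerivAt
    have h3 : HasFDerivAt (fun x : Euc N => 1 + ‖x‖^2) (2 • (innerSL ℝ x)) x :=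
      (hasStrictFDerivAt_norm_sq x).hasFDerivAt.const_add 1
    have h4 := (hasDerivAt_inv (hpos x)).comp_hasFDerivAt x h3
    have h5 := (h1.pow 2).mul (h2.mul h4)
    have h6 : fderiv ℝ (ψ i) x = _ := h5.fderiv
    rw [h6]
    have h7 : ⟪x, EuclideanSpace.single i (1:ℝ)⟫ = x i := by
      simp [EuclideanSpace.inner_single_right]
    have := hpos x
    simp [h7]
    field_simp
    ring
  have hsum : ∀ x : Euc N, (2 * φ x * (fderiv ℝ φ x x) / (1 + ‖x‖^2)
      + φ x ^ 2 * (N / (1 + ‖x‖^2) - 2 * ‖x‖^2 / (1 + ‖x‖^2)^2)) =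
      ∑ i, fderiv ℝ (ψ i) x (EuclideanSpace.single i 1) := by
    intro x
    simp only [hd]
    rw [Finset.sum_add_distrib, ← Finset.sum_div, ← Finset.mul_sum, ← map_sum,
      ← Finset.mul_sum, Finset.sum_sub_distrib, ← Finset.sum_div, ← Finset.sum_div, ← Finset.mul_sum]
    have e1 : ∑ i, x i • EuclideanSpace.single i (1:ℝ) = x := by
      have := (EuclideanSpace.basisFun (Fin N) ℝ).sum_repr x
      simpa using this
    have e2 : ∑ i, x i ^ 2 = ‖x‖^2 := by rw [EuclideanSpace.real_norm_sq_eq]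
    rw [e1, e2]
    simp [div_eq_mul_inv]
  simp only [hsum]
  rw [integral_finsetSum]
  · exact Finset.sum_eq_zero fun i _ => integral_fderiv_zero (hψ i) (hψc i) _
  · intro i _
    exact (((hψ i).continuous_fderiv (by norm_num)).clm_apply
      continuous_const).integrable_of_hasCompactSupport ((hψc i).fderiv_apply (𝕜 := ℝ) _)

lemma test_int {Ω : Set (Euc N)} {φ : Euc N → ℝ} (h : IsTest Ω φ) :
    Integrable (fun x : Euc N => (1 + ‖x‖^2)⁻¹ * φ x ^ 2) := by
  refine Continuous.integrable_of_hasCompactSupport ?_ ?_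
  · exact ((continuous_const.add (continuous_norm.pow 2)).inv₀
      (fun x => (by positivity : (1:ℝ) + ‖x‖^2 ≠ 0))).mul
      (h.1.continuous.pow 2)
  · exact HasCompactSupport.mul_left (h.2.1.comp_left (g := fun t : ℝ => t ^ 2) (by simp))

lemma grad_int {Ω : Set (Euc N)} {φ : Euc N → ℝ} (h : IsTest Ω φ) :
    Integrable (fun x : Euc N => ‖gradient φ x‖ ^ 2) := by
  refine Continuous.integrable_of_hasCompactSupport ?_ ?_
  · exact (gradient_cont h).norm.pow 2
  · exact (gradient_supp h).comp_left (g := fun t => ‖t‖ ^ 2) (by simp)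

lemma hardy_full {Ω : Set (Euc N)} (hN : 3 ≤ N) {φ : Euc N → ℝ} (h : IsTest Ω φ) :
    ∫ x : Euc N, (1 + ‖x‖^2)⁻¹ * φ x ^ 2 ≤ cN N ^ 2 * ∫ x : Euc N, ‖gradient φ x‖ ^ 2 := by
  have hN' : (0:ℝ) < (N:ℝ) - 2 := by
    have : (3:ℝ) ≤ N := by exact_mod_cast hN
    linarith
  have hc1 : ContDiff ℝ 1 φ := h.1.of_le (by exact_mod_cast le_top)
  have h0 := div_id φ hc1 h.2.1
  have hI1 := test_int h
  have hI2 := grad_int h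
  set k : ℝ := (N:ℝ) - 2 with hk
  have key : ∀ x : Euc N, k / 2 * ((1 + ‖x‖^2)⁻¹ * φ x ^ 2) - 2 / k * ‖gradient φ x‖ ^ 2 ≤
      (2 * φ x * (fderiv ℝ φ x x) / (1 + ‖x‖^2)
      + φ x ^ 2 * (N / (1 + ‖x‖^2) - 2 * ‖x‖^2 / (1 + ‖x‖^2)^2)) := by
    intro x
    have hp : 0 < 1 + ‖x‖^2 := by positivity
    have a1 : |fderiv ℝ φ x x| ≤ ‖gradient φ x‖ * ‖x‖ := by
      rw [← inner_gradient]; exact abs_real_inner_le_norm _ _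
    set D := fderiv ℝ φ x x
    set G := ‖gradient φ x‖
    set r := ‖x‖
    have hr : 0 ≤ r := norm_nonneg _
    have hG : 0 ≤ G := norm_nonneg _
    have a2 : D ^ 2 ≤ G ^ 2 * (1 + r^2) := by
      have : D^2 ≤ (G * r)^2 := sq_le_sq' (abs_le.1 a1).1 (abs_le.1 a1).2
      nlinarith [sq_nonneg G]
    have a3 : 0 ≤ k / 2 * (φ x ^2 * (1 + r^2)⁻¹) + 2 * φ x * D * (1+r^2)⁻¹ + 2 / k * G^2 := by
      have : D^2 * (1+r^2)⁻¹ ≤ G^2 := by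
        rw [← div_eq_mul_inv, div_le_iff₀ hp]; exact a2
      have b : 0 ≤ (1+r^2)⁻¹ * (k/2) * (φ x + 2 / k * D)^2 := by positivity
      have c : (1+r^2)⁻¹ * (k/2) * (φ x + 2 / k * D)^2 =
        k / 2 * (φ x ^2 * (1 + r^2)⁻¹) + 2 * φ x * D * (1+r^2)⁻¹ + 2 / k * (D^2 * (1+r^2)⁻¹) := by
        field_simp
        ring
      have d : 2 / k * (D^2 * (1+r^2)⁻¹) ≤ 2 / k * G^2 := by gcongr
      linarith
    have a4 : k * (1+r^2)⁻¹ ≤ N / (1 + r^2) - 2 * r^2 / (1 + r^2)^2 := by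
      have : N / (1 + r^2) - 2 * r^2 / (1 + r^2)^2 - k * (1+r^2)⁻¹ = 2 / (1+r^2)^2 := by
        rw [hk]; field_simp; ring
      have : 0 ≤ 2 / (1+r^2)^2 := by positivity
      linarith
    have a5 := mul_le_mul_of_nonneg_left a4 (sq_nonneg (φ x))
    rw [div_eq_mul_inv (2 * φ x * D)]
    linarith
  have hint : Integrable (fun x : Euc N => (2 * φ x * (fderiv ℝ φ x x) / (1 + ‖x‖^2)
      + φ x ^ 2 * (N / (1 + ‖x‖^2) - 2 * ‖x‖^2 / (1 + ‖x‖^2)^2))) := by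
    have hfd : Continuous (fun x => fderiv ℝ φ x x) :=
      (h.1.continuous_fderiv (by simp)).clm_apply continuous_id
    have hφ := h.1.continuous
    refine Continuous.integrable_of_hasCompactSupport ?_ ?_
    · have hp : ∀ x : Euc N, (1 + ‖x‖^2) ≠ 0 := fun x => by positivity
      have hp' : ∀ x : Euc N, (1 + ‖x‖^2)^2 ≠ 0 := fun x => by positivity
      fun_prop (disch := assumption)
    · refine h.2.1.mono ?_
      intro x hx hx0
      apply hx
      have hx0' : φ x = 0 := hx0
      simp [hx0']
  have hm := integral_mono ((hI1.const_mul (k/2)).sub (hI2.const_mul (2/k))) hint key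
  rw [h0] at hm
  have e := integral_sub (hI1.const_mul (k/2)) (hI2.const_mul (2/k))
  simp only [Pi.sub_apply] at hm
  rw [e, integral_const_mul, integral_const_mul] at hm
  set P := ∫ x : Euc N, (1 + ‖x‖^2)⁻¹ * φ x ^ 2
  set Q := ∫ x : Euc N, ‖gradient φ x‖ ^ 2
  have : cN N ^ 2 * Q = (2/k) * (2/k * Q) := by unfold cN; ring
  rw [this]
  have h9 : P = (2/k) * (k/2 * P) := by field_simp
  rw [h9]
  exact mul_le_mul_of_nonneg_left (by linarith) (by positivity)

lemma int3 {μ : Measure (Euc N)} {a b c : Euc N → ℝ} (ha : Integrable a μ) (hb : Integrable b μ)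
    (hc : Integrable c μ) (r s : ℝ) : ∫ x, (r * a x + s * b x + c x) ∂μ =
      r * (∫ x, a x ∂μ) + s * (∫ x, b x ∂μ) + ∫ x, c x ∂μ := by
  have h1 : Integrable (fun x => r * a x + s * b x) μ := (ha.const_mul r).add (hb.const_mul s)
  rw [integral_add h1 hc, integral_add (ha.const_mul r) (hb.const_mul s),
    integral_const_mul, integral_const_mul]

lemma cs_real {a b c : ℝ} (ha : 0 ≤ a) (h : ∀ t : ℝ, 0 ≤ a * (t * t) + (2 * b) * t + c) :
    b ≤ Real.sqrt a * Real.sqrt c := by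
  have h1 := discrim_le_zero h
  unfold discrim at h1
  rw [← Real.sqrt_mul ha]
  exact (le_abs_self b).trans (Real.abs_le_sqrt (by nlinarith))

lemma memV_iff {Ω : Set (Euc N)} {u : Euc N → Euc N} :
    MemL2V Ω 0 u ↔ MemLp u 2 (volume.restrict Ω) := by
  unfold MemL2V
  simp only [Real.rpow_zero, one_mul]
  constructor
  · rintro ⟨h1, h2⟩
    exact (memLp_two_iff_integrable_sq_norm h1).2 h2
  · intro h
    exact ⟨h.1, (memLp_two_iff_integrable_sq_norm h.1).1 h⟩

lemma A_meas {Ω : Set (Euc N)} (M : Coeff N Ω) {u : Euc N → Euc N}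
    (hu : AEStronglyMeasurable u (volume.restrict Ω)) :
    AEStronglyMeasurable (fun x => M.A x (u x)) (volume.restrict Ω) := by
  have e : (fun x => M.A x (u x)) = fun x => ∑ i, (u x i) • M.A x (EuclideanSpace.single i 1) := by
    funext x
    have := (EuclideanSpace.basisFun (Fin N) ℝ).sum_repr (u x)
    conv_lhs => rw [← this]
    simp
  rw [e]
  refine Finset.aestronglyMeasurable_fun_sum _ fun i _ => ?_
  exact ((EuclideanSpace.proj (𝕜 := ℝ) i).continuous.comp_aestronglyMeasurable hu).smul (M.meas _)

lemma A_int {Ω : Set (Euc N)} (M : Coeff N Ω) {u v : Euc N → Euc N}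
    (hu : MemLp u 2 (volume.restrict Ω)) (hv : MemLp v 2 (volume.restrict Ω)) :
    Integrable (fun x => ⟪M.A x (u x), v x⟫) (volume.restrict Ω) := by
  obtain ⟨C, hC⟩ := M.bdd
  have h1 := (memLp_two_iff_integrable_sq_norm hu.1).1 hu
  have h2 := (memLp_two_iff_integrable_sq_norm hv.1).1 hv
  refine ((h1.add h2).const_mul |C|).mono' ((A_meas M hu.1).inner hv.1) ?_
  filter_upwards [hC] with x hx
  have a := norm_inner_le_norm (𝕜 := ℝ) (M.A x (u x)) (v x)
  have b := hx (u x)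
  have c : C * ‖u x‖ ≤ |C| * ‖u x‖ := by gcongr; exact le_abs_self C
  calc _ ≤ ‖M.A x (u x)‖ * ‖v x‖ := a
    _ ≤ |C| * ‖u x‖ * ‖v x‖ := by gcongr; linarith
    _ = |C| * (‖u x‖ * ‖v x‖) := by ring
    _ ≤ |C| * (‖u x‖^2 + ‖v x‖^2) := by
      gcongr
      nlinarith [sq_nonneg (‖u x‖ - ‖v x‖), sq_nonneg (‖u x‖), sq_nonneg (‖v x‖)]

lemma sqA_nonneg {Ω : Set (Euc N)} (M : Coeff N Ω) (u : Euc N → Euc N) : 0 ≤ sqA Ω M.A u := by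
  refine integral_nonneg_of_ae ?_
  filter_upwards [M.coer] with x hx
  exact le_trans (by positivity) (hx (u x))

lemma sqA_comb {Ω : Set (Euc N)} (M : Coeff N Ω) {u v : Euc N → Euc N}
    (hu : MemLp u 2 (volume.restrict Ω)) (hv : MemLp v 2 (volume.restrict Ω)) (t : ℝ) :
    sqA Ω M.A (fun x => t • u x + v x) =
      sqA Ω M.A u * (t * t) + (2 * ipA Ω M.A u v) * t + sqA Ω M.A v := by
  unfold sqA ipA
  have e : ∀ x, ⟪M.A x (t • u x + v x), t • u x + v x⟫ =
      (t * t) * ⟪M.A x (u x), u x⟫ + (2 * t) * ⟪M.A x (u x), v x⟫ + ⟪M.A x (v x), v x⟫ := by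
    intro x
    have hs : ⟪M.A x (v x), u x⟫ = ⟪M.A x (u x), v x⟫ := by
      rw [M.symm, real_inner_comm]
    simp only [map_add, map_smul, inner_add_left, inner_add_right, real_inner_smul_left,
      real_inner_smul_right, hs]
    ring
  simp only [e]
  rw [int3 (A_int M hu hu) (A_int M hu hv) (A_int M hv hv)]
  ring

lemma A_cs {Ω : Set (Euc N)} (M : Coeff N Ω) {u v : Euc N → Euc N}
    (hu : MemLp u 2 (volume.restrict Ω)) (hv : MemLp v 2 (volume.restrict Ω)) :
    ipA Ω M.A u v ≤ nrmA Ω M.A u * nrmA Ω M.A v := by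
  refine cs_real (sqA_nonneg M u) fun t => ?_
  rw [← sqA_comb M hu hv]
  exact sqA_nonneg M _

lemma A_tri {Ω : Set (Euc N)} (M : Coeff N Ω) {u v : Euc N → Euc N}
    (hu : MemLp u 2 (volume.restrict Ω)) (hv : MemLp v 2 (volume.restrict Ω)) :
    nrmA Ω M.A v ≤ nrmA Ω M.A u + nrmA Ω M.A (fun x => u x - v x) := by
  have h1 := sqA_comb M (hu.sub hv) hu (-1)
  have h2 := A_cs M (u := fun x => - (u x - v x)) (hu.sub hv).neg hu
  have e : (fun x => (-1:ℝ) • (u - v) x + u x) = v := by funext x; simp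
  have e2 : ipA Ω M.A (fun x => - (u x - v x)) u = - ipA Ω M.A (u - v) u := by
    unfold ipA
    rw [← integral_neg]
    refine integral_congr_ae (Eventually.of_forall fun x => ?_)
    simp only [map_neg, inner_neg_left, Pi.sub_apply]
  have e3 : nrmA Ω M.A (fun x => - (u x - v x)) = nrmA Ω M.A (u - v) := by
    unfold nrmA sqA ipA
    simp only [map_neg, inner_neg_left, inner_neg_right, neg_neg, Pi.sub_apply]
  rw [e] at h1
  rw [e2, e3] at h2
  change nrmA Ω M.A v ≤ nrmA Ω M.A u + nrmA Ω M.A (u - v)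
  have s1 : nrmA Ω M.A u ^ 2 = sqA Ω M.A u := Real.sq_sqrt (sqA_nonneg M _)
  have s2 : nrmA Ω M.A (u - v) ^ 2 = sqA Ω M.A (u - v) := Real.sq_sqrt (sqA_nonneg M _)
  have n1 : 0 ≤ nrmA Ω M.A u := Real.sqrt_nonneg _
  have n2 : 0 ≤ nrmA Ω M.A (u - v) := Real.sqrt_nonneg _
  refine Real.sqrt_le_iff.2 ⟨by positivity, ?_⟩
  rw [h1]
  nlinarith

lemma A_bdd {Ω : Set (Euc N)} (M : Coeff N Ω) : ∃ K : ℝ, ∀ u : Euc N → Euc N,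
    MemLp u 2 (volume.restrict Ω) → nrmA Ω M.A u ≤ K * nrmL2V Ω 0 u := by
  obtain ⟨C, hC⟩ := M.bdd
  refine ⟨Real.sqrt |C|, fun u hu => ?_⟩
  unfold nrmA nrmL2V
  rw [← Real.sqrt_mul (abs_nonneg C)]
  refine Real.sqrt_le_sqrt ?_
  unfold sqA ipA sqL2V
  rw [← integral_const_mul]
  refine integral_mono_ae (A_int M hu hu) ((memV_iff.2 hu).2.const_mul _) ?_
  filter_upwards [hC] with x hx
  have a := real_inner_le_norm (M.A x (u x)) (u x)
  have b := hx (u x)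
  have c : C * ‖u x‖ ≤ |C| * ‖u x‖ := by gcongr; exact le_abs_self C
  simp only [Real.rpow_zero, one_mul]
  calc _ ≤ ‖M.A x (u x)‖ * ‖u x‖ := a
    _ ≤ |C| * ‖u x‖ * ‖u x‖ := by gcongr; linarith
    _ = |C| * ‖u x‖ ^ 2 := by ring

lemma A_coer {Ω : Set (Euc N)} (M : Coeff N Ω) {u : Euc N → Euc N}
    (hu : MemLp u 2 (volume.restrict Ω)) : nrmL2V Ω 0 u ≤ M.α * nrmA Ω M.A u := by
  have ha := M.α_pos
  have h : sqL2V Ω 0 u ≤ M.α ^ 2 * sqA Ω M.A u := by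
    unfold sqA ipA sqL2V
    rw [← integral_const_mul]
    refine integral_mono_ae (memV_iff.2 hu).2 ((A_int M hu hu).const_mul _) ?_
    filter_upwards [M.coer] with x hx
    simp only [Real.rpow_zero, one_mul]
    have := mul_le_mul_of_nonneg_left (hx (u x)) (sq_nonneg M.α)
    have e : M.α ^ 2 * (M.α⁻¹ ^ 2 * ‖u x‖ ^ 2) = ‖u x‖ ^ 2 := by field_simp
    linarith
  unfold nrmL2V nrmA
  calc _ ≤ Real.sqrt (M.α ^ 2 * sqA Ω M.A u) := Real.sqrt_le_sqrt h
    _ = _ := by rw [Real.sqrt_mul (sq_nonneg _), Real.sqrt_sq ha.le]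

lemma test_memL2 {Ω : Set (Euc N)} {φ : Euc N → ℝ} (h : IsTest Ω φ) : MemL2 Ω (-1) φ := by
  refine ⟨h.1.continuous.aestronglyMeasurable, ?_⟩
  simp only [Real.rpow_neg_one]
  exact (test_int h).restrict

lemma grad_memLp {Ω : Set (Euc N)} {φ : Euc N → ℝ} (h : IsTest Ω φ) :
    MemLp (gradient φ) 2 (volume.restrict Ω) := by
  rw [← memV_iff]
  refine ⟨(gradient_cont h).aestronglyMeasurable, ?_⟩
  simp only [Real.rpow_zero, one_mul]
  exact (grad_int h).restrict

lemma hardy {Ω : Set (Euc N)} (hN : 3 ≤ N) {φ : Euc N → ℝ} (h : IsTest Ω φ) :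
    nrmL2 Ω (-1) φ ≤ cN N * nrmL2V Ω 0 (gradient φ) := by
  have hc : 0 ≤ cN N := by
    have : (3:ℝ) ≤ N := by exact_mod_cast hN
    unfold cN
    exact div_nonneg (by norm_num) (by linarith)
  have h1 := hardy_full hN h
  have e1 : sqL2 Ω (-1) φ = ∫ x : Euc N, (1 + ‖x‖^2)⁻¹ * φ x ^ 2 := by
    unfold sqL2
    simp only [Real.rpow_neg_one]
    exact setIntegral_eq_integral_of_forall_compl_eq_zero fun x hx => by simp [test_zero h hx]
  have e2 : sqL2V Ω 0 (gradient φ) = ∫ x : Euc N, ‖gradient φ x‖ ^ 2 := by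
    unfold sqL2V
    simp only [Real.rpow_zero, one_mul]
    exact setIntegral_eq_integral_of_forall_compl_eq_zero fun x hx => by simp [gradient_zero h hx]
  unfold nrmL2 nrmL2V
  rw [e1, e2]
  calc _ ≤ _ := Real.sqrt_le_sqrt h1
    _ = _ := by rw [Real.sqrt_mul (sq_nonneg _), Real.sqrt_sq hc]

lemma s_nonneg (x : Euc N) (F p t : ℝ) : 0 ≤ (t * t) * ((1 + ‖x‖ ^ 2) * F ^ 2) +
    (2 * t) * (F * p) + (1 + ‖x‖^2)⁻¹ * p ^ 2 := by
  have hp : 0 < 1 + ‖x‖^2 := by positivity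
  have : (t * t) * ((1 + ‖x‖ ^ 2) * F ^ 2) +
    (2 * t) * (F * p) + (1 + ‖x‖^2)⁻¹ * p ^ 2 =
      (1 + ‖x‖^2)⁻¹ * (t * (1 + ‖x‖^2) * F + p)^2 := by
    field_simp
    ring
  rw [this]
  positivity

lemma s_int {Ω : Set (Euc N)} {F p : Euc N → ℝ} (hF : MemL2 Ω 1 F) (hp : MemL2 Ω (-1) p) :
    Integrable (fun x => F x * p x) (volume.restrict Ω) := by
  obtain ⟨a1, b1⟩ := hF
  obtain ⟨a2, b2⟩ := hp
  simp only [Real.rpow_one, Real.rpow_neg_one] at b1 b2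
  refine (b1.add b2).mono' (a1.mul a2) (Eventually.of_forall fun x => ?_)
  have h1 := s_nonneg x (F x) (p x) 1
  have h2 := s_nonneg x (F x) (p x) (-1)
  have h3 : 0 ≤ (1 + ‖x‖ ^ 2) * F x ^ 2 := by positivity
  have h4 : 0 ≤ (1 + ‖x‖ ^ 2)⁻¹ * p x ^ 2 := by positivity
  simp only [Pi.add_apply]
  rw [Real.norm_eq_abs, abs_le]
  constructor <;> linarith

lemma s_cs {Ω : Set (Euc N)} {F p : Euc N → ℝ} (hF : MemL2 Ω 1 F) (hp : MemL2 Ω (-1) p) :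
    ∫ x in Ω, F x * p x ≤ nrmL2 Ω 1 F * nrmL2 Ω (-1) p := by
  have hi := s_int hF hp
  obtain ⟨a1, b1⟩ := hF
  obtain ⟨a2, b2⟩ := hp
  unfold nrmL2 sqL2
  simp only [Real.rpow_one, Real.rpow_neg_one] at b1 b2 ⊢
  refine cs_real (integral_nonneg fun x => by positivity) fun t => ?_
  have h : 0 ≤ ∫ x in Ω, ((t * t) * ((1 + ‖x‖ ^ 2) * F x ^ 2) +
    (2 * t) * (F x * p x) + (1 + ‖x‖^2)⁻¹ * p x ^ 2) :=
    integral_nonneg fun x => s_nonneg x _ _ t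
  rw [int3 b1 hi b2] at h
  linarith

lemma s_add {Ω : Set (Euc N)} {F G : Euc N → ℝ} (hF : MemL2 Ω 1 F) (hG : MemL2 Ω 1 G) :
    MemL2 Ω 1 (fun x => F x + G x) := by
  obtain ⟨a1, b1⟩ := hF
  obtain ⟨a2, b2⟩ := hG
  refine ⟨a1.add a2, ?_⟩
  simp only [Real.rpow_one] at b1 b2 ⊢
  refine ((b1.add b2).const_mul 2).mono' ?_ (Eventually.of_forall fun x => ?_)
  · exact (by fun_prop : Continuous fun x : Euc N => 1 + ‖x‖^2).aestronglyMeasurable.mul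
      ((a1.add a2).pow 2)
  · rw [Real.norm_of_nonneg (by positivity)]
    simp only [Pi.add_apply]
    have hp : 0 < 1 + ‖x‖^2 := by positivity
    nlinarith [mul_nonneg hp.le (sq_nonneg (F x - G x))]

/-- Conforming upper bound (majorant): `‖∇e‖_A ≤ c_{N,α}‖f + div v‖_{L²₊₁} + ‖∇ũ − A⁻¹v‖_A`. -/
theorem stmt_4 (Ω : Set (Euc N)) (hΩ : IsOpen Ω) (hN : 3 ≤ N) (M : Coeff N Ω)
    (f : Euc N → ℝ) (hf : MemL2 Ω 1 f)
    (uh : Euc N → ℝ) (gu : Euc N → Euc N)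
    (huh : MemL2 Ω (-1) uh) (hgu : MemL2V Ω 0 gu) (hguw : IsWeakGrad Ω uh gu)
    (hweak : ∀ φ : Euc N → ℝ, IsTest Ω φ →
      (∫ x in Ω, ⟪M.A x (gu x), gradient φ x⟫) = ∫ x in Ω, f x * φ x)
    (ut : Euc N → ℝ) (gt : Euc N → Euc N)
    (hut : MemL2 Ω (-1) ut) (hgt : MemL2V Ω 0 gt) (hgtw : IsWeakGrad Ω ut gt)
    (he : MemH10 Ω (fun x => uh x - ut x) (fun x => gu x - gt x)) :
    ∀ (v : Euc N → Euc N) (dv : Euc N → ℝ) (w : Euc N → Euc N),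
      MemL2V Ω 0 v → MemL2 Ω 1 dv → IsWeakDiv Ω v dv → IsAInv Ω M.A v w →
      nrmA Ω M.A (fun x => gu x - gt x) ≤
        M.α * cN N * nrmL2 Ω 1 (fun x => f x + dv x) +
          nrmA Ω M.A (fun x => gt x - w x) := by
  intro v dv w hv hdv hdiv hw
  obtain ⟨_, hgm, _, φ, hφ, _, hlim⟩ := he
  obtain ⟨hwm, hAw⟩ := hw
  rw [memV_iff] at hgu hgt hgm hwm
  obtain ⟨K, hK⟩ := A_bdd M
  set g : Euc N → Euc N := fun x => gu x - gt x with hg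
  set R : ℝ := M.α * cN N * nrmL2 Ω 1 (fun x => f x + dv x) +
          nrmA Ω M.A (fun x => gt x - w x) with hR
  have hc : 0 ≤ cN N := by
    have : (3:ℝ) ≤ N := by exact_mod_cast hN
    unfold cN
    exact div_nonneg (by norm_num) (by linarith)
  have ha := M.α_pos
  have hnF : 0 ≤ nrmL2 Ω 1 (fun x => f x + dv x) := Real.sqrt_nonneg _
  have hR0 : 0 ≤ R := add_nonneg (by positivity) (Real.sqrt_nonneg _)
  have hg0 : 0 ≤ nrmA Ω M.A g := Real.sqrt_nonneg _
  -- the key estimate on test functions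
  have key : ∀ n, ipA Ω M.A g (gradient (φ n)) ≤ R * nrmA Ω M.A (gradient (φ n)) := by
    intro n
    have ht := hφ n
    have hp := grad_memLp ht
    have hF := s_add hf hdv
    have e1 : ipA Ω M.A g (gradient (φ n)) = (∫ x in Ω, (f x + dv x) * φ n x)
        + ipA Ω M.A (fun x => w x - gt x) (gradient (φ n)) := by
      have i1 : ipA Ω M.A g (gradient (φ n)) = (∫ x in Ω, ⟪M.A x (gu x), gradient (φ n) x⟫)
          - ∫ x in Ω, ⟪M.A x (gt x), gradient (φ n) x⟫ := by
        rw [← integral_sub (A_int M hgu hp) (A_int M hgt hp)]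
        unfold ipA
        simp only [hg, map_sub, inner_sub_left]
      have i2 : ipA Ω M.A (fun x => w x - gt x) (gradient (φ n)) =
          (∫ x in Ω, ⟪M.A x (w x), gradient (φ n) x⟫)
          - ∫ x in Ω, ⟪M.A x (gt x), gradient (φ n) x⟫ := by
        rw [← integral_sub (A_int M hwm hp) (A_int M hgt hp)]
        unfold ipA
        simp only [map_sub, inner_sub_left]
      have i3 : (∫ x in Ω, ⟪M.A x (w x), gradient (φ n) x⟫) = - ∫ x in Ω, dv x * φ n x := by
        rw [← hdiv _ ht]
        refine integral_congr_ae ?_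
        filter_upwards [hAw] with x hx
        rw [hx]
      have i4 : (∫ x in Ω, (f x + dv x) * φ n x) =
          (∫ x in Ω, f x * φ n x) + ∫ x in Ω, dv x * φ n x := by
        rw [← integral_add (s_int hf (test_memL2 ht)) (s_int hdv (test_memL2 ht))]
        simp only [add_mul]
      rw [i1, i2, i3, i4, hweak _ ht]
      ring
    have e2 := s_cs hF (test_memL2 ht)
    have e3 := hardy hN ht
    have e4 := A_coer M hp
    have e5 := A_cs M (u := fun x => w x - gt x) (hwm.sub hgt) hp
    have e6 : nrmA Ω M.A (fun x => w x - gt x) = nrmA Ω M.A (fun x => gt x - w x) := by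
      unfold nrmA sqA ipA
      congr 2
      funext x
      beta_reduce
      rw [← neg_sub (gt x) (w x)]
      simp only [map_neg, inner_neg_left, inner_neg_right, neg_neg]
    have e7 : nrmL2 Ω 1 (fun x => f x + dv x) * nrmL2 Ω (-1) (φ n) ≤
        nrmL2 Ω 1 (fun x => f x + dv x) * (cN N * (M.α * nrmA Ω M.A (gradient (φ n)))) := by
      refine mul_le_mul_of_nonneg_left (e3.trans ?_) hnF
      exact mul_le_mul_of_nonneg_left e4 hc
    rw [e6] at e5
    rw [e1, hR]
    linarith
  have step : ∀ n, nrmA Ω M.A g ^ 2 ≤ R * nrmA Ω M.A g +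
      (nrmA Ω M.A g + R) * (K * nrmL2V Ω 0 (fun x => g x - gradient (φ n) x)) := by
    intro n
    have hp := grad_memLp (hφ n)
    have hq : MemLp (fun x => g x - gradient (φ n) x) 2 (volume.restrict Ω) := hgm.sub hp
    have h1 : nrmA Ω M.A g ^ 2 = ipA Ω M.A g (fun x => g x - gradient (φ n) x)
        + ipA Ω M.A g (gradient (φ n)) := by
      have : nrmA Ω M.A g ^ 2 = sqA Ω M.A g := Real.sq_sqrt (sqA_nonneg M _)
      rw [this]
      unfold sqA ipA
      rw [← integral_add (A_int M hgm hq) (A_int M hgm hp)]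
      simp only [← inner_add_right, sub_add_cancel]
    have h2 := A_cs M hgm hq
    have h3 := A_tri M hgm hp
    have h4 := hK _ hq
    have h5 := mul_le_mul_of_nonneg_left h3 hR0
    have h6 := mul_le_mul_of_nonneg_left h4 (add_nonneg hg0 hR0)
    have h7 := key n
    rw [h1]
    linarith
  have hl : Tendsto (fun n => R * nrmA Ω M.A g +
      (nrmA Ω M.A g + R) * (K * nrmL2V Ω 0 (fun x => g x - gradient (φ n) x))) atTop
      (𝓝 (R * nrmA Ω M.A g + (nrmA Ω M.A g + R) * (K * 0))) :=
    ((hlim.const_mul K).const_mul _).const_add _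
  have hfin := ge_of_tendsto' hl step
  rcases hg0.eq_or_lt with h0 | h0
  · rw [← h0]; exact hR0
  · nlinarith
end
end

section
/- Sharpness of the conforming upper bound: under the hypotheses of the conforming majorant estimate, the field v̂ := A∇û belongs to L²(Ω;ℝ^N) and has weak divergence div v̂ = −f ∈ L²₊₁(Ω), and M₊(∇ũ, v̂) = c_{N,α}‖f + div v̂‖_{L²₊₁(Ω)} + ‖∇ũ − A^{−1}v̂‖_A = ‖∇(û − ũ)‖_A; hence the infimum of M₊(∇ũ, v) over all v ∈ L²(Ω;ℝ^N) with weak divergence in L²₊₁(Ω) equals ‖∇(û − ũ)‖_A and is attained. -/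
open MeasureTheory Filter Topology
open scoped RealInnerProductSpace

noncomputable section

variable {N : ℕ}

lemma aux_cs {X : Type*} [MeasurableSpace X] {μ : Measure X} {F G h : X → ℝ}
    (hF : Integrable F μ) (hG : Integrable G μ) (hF0 : ∀ᵐ x ∂μ, 0 ≤ F x) (hG0 : ∀ᵐ x ∂μ, 0 ≤ G x)
    (hh : ∀ᵐ x ∂μ, |h x| ≤ √(F x) * √(G x)) :
    |∫ x, h x ∂μ| ≤ √(∫ x, F x ∂μ) * √(∫ x, G x ∂μ) := by
  have key : ∀ K : X → ℝ, Integrable K μ → (∀ᵐ x ∂μ, 0 ≤ K x) →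
      MemLp (fun x => √(K x)) (ENNReal.ofReal 2) μ ∧
      (∫ x, (√(K x)) ^ (2:ℝ) ∂μ) = ∫ x, K x ∂μ := by
    intro K hK hK0
    refine ⟨?_, ?_⟩
    · have : ENNReal.ofReal 2 = 2 := by norm_num
      rw [this, memLp_two_iff_integrable_sq (Real.continuous_sqrt.comp_aestronglyMeasurable hK.1)]
      refine hK.congr ?_
      filter_upwards [hK0] with x hx
      rw [Real.sq_sqrt hx]
    · refine integral_congr_ae ?_
      filter_upwards [hK0] with x hx
      simp [Real.sq_sqrt hx]
  obtain ⟨a1, a2⟩ := key F hF hF0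
  obtain ⟨b1, b2⟩ := key G hG hG0
  have h2 : Real.HolderConjugate 2 2 := by
    constructor <;> norm_num
  have := integral_mul_le_Lp_mul_Lq_of_nonneg h2 (μ := μ)
    (Eventually.of_forall fun x => Real.sqrt_nonneg (F x))
    (Eventually.of_forall fun x => Real.sqrt_nonneg (G x)) a1 b1
  rw [a2, b2, ← Real.sqrt_eq_rpow, ← Real.sqrt_eq_rpow] at this
  refine le_trans ?_ this
  rw [← Real.norm_eq_abs]
  refine norm_integral_le_of_norm_le ?_ hh
  have t : ENNReal.ofReal 2 = 2 := by norm_num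
  rw [t] at a1 b1
  exact a1.integrable_mul b1

lemma aux_div_zero {g : Euc N → ℝ} (hg : ContDiff ℝ 1 g) (hc : HasCompactSupport g) (v : Euc N) :
    ∫ x, fderiv ℝ g x v = 0 := by
  have h1 : Continuous (fun x => fderiv ℝ g x v) :=
    (hg.continuous_fderiv one_ne_zero).clm_apply continuous_const
  have h2 : HasCompactSupport (fun x => fderiv ℝ g x v) := hc.fderiv_apply ℝ v
  have := integral_mul_fderiv_eq_neg_fderiv_mul_of_integrable (𝕜 := ℝ) (μ := (volume : Measure (Euc N)))
    (f := fun _ => (1:ℝ)) (g := g) (v := v) (by simp)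
    (by simpa using h1.integrable_of_hasCompactSupport h2)
    (by simpa using hg.continuous.integrable_of_hasCompactSupport hc)
    (by intro x _; fun_prop) (by intro x _; exact hg.differentiable one_ne_zero x)
  simpa using this

lemma aux_deriv {φ : Euc N → ℝ} (hφ : ContDiff ℝ 1 φ) (i : Fin N) (x : Euc N) :
    fderiv ℝ (fun x => φ x ^ 2 * x i * (1 + ‖x‖ ^ 2)⁻¹) x (EuclideanSpace.single i 1) =
      2 * φ x * (1 + ‖x‖ ^ 2)⁻¹ * (x i * fderiv ℝ φ x (EuclideanSpace.single i 1))
      + φ x ^ 2 * (1 + ‖x‖ ^ 2)⁻¹ - 2 * φ x ^ 2 * ((1 + ‖x‖ ^ 2)⁻¹) ^ 2 * (x i) ^ 2 := by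
  have hpos : (1 + ‖x‖ ^ 2) ≠ 0 := by positivity
  have d1 : HasFDerivAt φ (fderiv ℝ φ x) x := (hφ.differentiable one_ne_zero x).hasFDerivAt
  have d2 : HasFDerivAt (fun x : Euc N => x i) (EuclideanSpace.proj (𝕜 := ℝ) i : Euc N →L[ℝ] ℝ) x :=
    (EuclideanSpace.proj (𝕜 := ℝ) i : Euc N →L[ℝ] ℝ).hasFDerivAt
  have d3 : HasFDerivAt (fun x : Euc N => ‖x‖ ^ 2) (2 • innerSL ℝ x) x :=
    (hasStrictFDerivAt_norm_sq x).hasFDerivAt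
  have d4 := (d3.const_add 1)
  have d5 : HasFDerivAt (fun x : Euc N => (1 + ‖x‖ ^ 2)⁻¹) _ x :=
    (hasDerivAt_inv hpos).comp_hasFDerivAt x d4
  have d6 := ((d1.pow 2).mul d2).mul d5
  have := d6.fderiv
  have e : (fun x => φ x ^ 2 * x i * (1 + ‖x‖ ^ 2)⁻¹) =
    (((fun x => φ x ^ 2) * fun x : Euc N => x i) * fun x => (1 + ‖x‖ ^ 2)⁻¹) := rfl
  rw [e, this]
  simp [EuclideanSpace.inner_single_right]
  field_simp
  ring

lemma aux_sum {φ : Euc N → ℝ} (hφ : ContDiff ℝ 1 φ) (x : Euc N) :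
    ∑ i, fderiv ℝ (fun x => φ x ^ 2 * x i * (1 + ‖x‖ ^ 2)⁻¹) x (EuclideanSpace.single i 1) =
      2 * φ x * (1 + ‖x‖ ^ 2)⁻¹ * fderiv ℝ φ x x
      + N * (φ x ^ 2 * (1 + ‖x‖ ^ 2)⁻¹) - 2 * φ x ^ 2 * ((1 + ‖x‖ ^ 2)⁻¹) ^ 2 * ‖x‖ ^ 2 := by
  simp_rw [aux_deriv hφ]
  have e : fderiv ℝ φ x x = ∑ i, x i * fderiv ℝ φ x (EuclideanSpace.single i 1) := by
    have h := congrArg (fderiv ℝ φ x) ((EuclideanSpace.basisFun (Fin N) ℝ).sum_repr x)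
    rw [← h]
    simp only [map_sum, map_smul]
    simp
  rw [Finset.sum_sub_distrib, Finset.sum_add_distrib, ← Finset.mul_sum, e]
  have e2 : ‖x‖ ^ 2 = ∑ i, x i ^ 2 := by simp [EuclideanSpace.norm_sq_eq x]
  rw [← Finset.mul_sum, ← Finset.mul_sum, ← e2]
  simp
  ring

lemma aux_hardy0 (hN : 3 ≤ N) {φ : Euc N → ℝ} (hφ : ContDiff ℝ 1 φ) (hc : HasCompactSupport φ) :
    √(∫ x, φ x ^ 2 * (1 + ‖x‖ ^ 2)⁻¹) ≤ cN N * √(∫ x, ‖gradient φ x‖ ^ 2) := by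
  have hpos : ∀ x : Euc N, (1 + ‖x‖ ^ 2) ≠ 0 := fun x => by positivity
  have hφc := hφ.continuous
  have hq : ContDiff ℝ 1 (fun x : Euc N => (1 + ‖x‖ ^ 2)⁻¹) :=
    (contDiff_const.add (contDiff_norm_sq ℝ)).inv hpos
  have hqc := hq.continuous
  have hDc : Continuous (fun x => fderiv ℝ φ x x) :=
    (hφ.continuous_fderiv one_ne_zero).clm_apply continuous_id
  have hgc : Continuous (fun x => gradient φ x) := 
    (InnerProductSpace.toDual ℝ (Euc N)).symm.continuous.comp (hφ.continuous_fderiv one_ne_zero)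
  have hinner : ∀ x y, fderiv ℝ φ x y = ⟪gradient φ x, y⟫ := by
    intro x y
    rw [← toDual_gradient]; simp
  have ic : ∀ K : Euc N → ℝ, Continuous K → (∀ x, φ x = 0 → K x = 0) → Integrable K := by
    intro K hK h0
    refine hK.integrable_of_hasCompactSupport (hc.mono ?_)
    intro x hx h; exact hx (h0 x h)
  have hI : Integrable (fun x => φ x ^ 2 * (1 + ‖x‖ ^ 2)⁻¹) := ic _ (by fun_prop) (by
    intro x h; simp [h])
  have hI1 : Integrable (fun x => 2 * φ x * (1 + ‖x‖ ^ 2)⁻¹ * fderiv ℝ φ x x) :=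
    ic _ (by fun_prop) (by intro x h; simp [h])
  have hI2 : Integrable (fun x => 2 * φ x ^ 2 * ((1 + ‖x‖ ^ 2)⁻¹) ^ 2 * ‖x‖ ^ 2) :=
    ic _ (by fun_prop) (by intro x h; simp [h])
  have hG : Integrable (fun x => ‖gradient φ x‖ ^ 2) := by
    refine Continuous.integrable_of_hasCompactSupport (by fun_prop) ((hc.fderiv ℝ).mono ?_)
    intro x hx h
    apply hx
    have : gradient φ x = 0 := by simp [gradient, h]
    simp [this]
  have hzero : ∫ x, (2 * φ x * (1 + ‖x‖ ^ 2)⁻¹ * fderiv ℝ φ x x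
      + N * (φ x ^ 2 * (1 + ‖x‖ ^ 2)⁻¹) - 2 * φ x ^ 2 * ((1 + ‖x‖ ^ 2)⁻¹) ^ 2 * ‖x‖ ^ 2) = 0 := by
    simp_rw [← aux_sum hφ]
    have hcd : ∀ i : Fin N, ContDiff ℝ 1 (fun x : Euc N => φ x ^ 2 * x i * (1 + ‖x‖ ^ 2)⁻¹) := by
      intro i
      have : ContDiff ℝ 1 (fun x : Euc N => x i) :=
        (EuclideanSpace.proj (𝕜 := ℝ) i : Euc N →L[ℝ] ℝ).contDiff
      exact ((hφ.pow 2).mul this).mul hq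
    have hcs : ∀ i : Fin N, HasCompactSupport (fun x : Euc N => φ x ^ 2 * x i * (1 + ‖x‖ ^ 2)⁻¹) := by
      intro i
      refine hc.mono ?_
      intro x hx h
      exact hx (by simp [h])
    rw [integral_finsetSum]
    · exact Finset.sum_eq_zero fun i _ => aux_div_zero (hcd i) (hcs i) _
    · intro i _
      exact (((hcd i).continuous_fderiv one_ne_zero).clm_apply continuous_const).integrable_of_hasCompactSupport ((hcs i).fderiv_apply ℝ _)
  have hI3 : Integrable (fun x => 2 * φ x * (1 + ‖x‖ ^ 2)⁻¹ * fderiv ℝ φ x x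
      + N * (φ x ^ 2 * (1 + ‖x‖ ^ 2)⁻¹)) := hI1.add (hI.const_mul _)
  rw [integral_sub hI3 hI2, integral_add hI1 (hI.const_mul _),
    integral_const_mul] at hzero
  have hle : ∫ x, 2 * φ x ^ 2 * ((1 + ‖x‖ ^ 2)⁻¹) ^ 2 * ‖x‖ ^ 2 ≤
      ∫ x, 2 * (φ x ^ 2 * (1 + ‖x‖ ^ 2)⁻¹) := by
    refine integral_mono hI2 (hI.const_mul _) fun x => ?_
    have : ((1 + ‖x‖ ^ 2)⁻¹) * ‖x‖ ^ 2 ≤ 1 := by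
      rw [inv_mul_le_one₀ (by positivity)]; linarith
    have h3 : 0 ≤ 2 * (φ x ^ 2 * (1 + ‖x‖ ^ 2)⁻¹) := by positivity
    have := mul_le_mul_of_nonneg_left this h3
    simp only
    linarith
  rw [integral_const_mul] at hle
  have hcs := aux_cs (h := fun x => φ x * (1 + ‖x‖ ^ 2)⁻¹ * fderiv ℝ φ x x) hI hG
    (Eventually.of_forall fun x => by positivity) (Eventually.of_forall fun x => by positivity)
    (Eventually.of_forall fun x => by
      rw [← Real.sqrt_mul (by positivity)]
      refine Real.abs_le_sqrt ?_
      rw [hinner]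
      have h1 : ⟪gradient φ x, x⟫ ^ 2 ≤ ‖gradient φ x‖ ^ 2 * ‖x‖ ^ 2 := by
        rw [← mul_pow, ← sq_abs]
        exact pow_le_pow_left₀ (abs_nonneg _) (abs_real_inner_le_norm _ _) 2
      have h2 : ((1 + ‖x‖ ^ 2)⁻¹) * ‖x‖ ^ 2 ≤ 1 := by
        rw [inv_mul_le_one₀ (by positivity)]; linarith
      calc (φ x * (1 + ‖x‖ ^ 2)⁻¹ * ⟪gradient φ x, x⟫) ^ 2
          = φ x ^ 2 * ((1 + ‖x‖ ^ 2)⁻¹) ^ 2 * ⟪gradient φ x, x⟫ ^ 2 := by ring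
        _ ≤ φ x ^ 2 * ((1 + ‖x‖ ^ 2)⁻¹) ^ 2 * (‖gradient φ x‖ ^ 2 * ‖x‖ ^ 2) := by gcongr
        _ = φ x ^ 2 * (1 + ‖x‖ ^ 2)⁻¹ * ‖gradient φ x‖ ^ 2 * ((1 + ‖x‖ ^ 2)⁻¹ * ‖x‖ ^ 2) := by ring
        _ ≤ φ x ^ 2 * (1 + ‖x‖ ^ 2)⁻¹ * ‖gradient φ x‖ ^ 2 * 1 := by gcongr
        _ = _ := by ring)
  have e2 : ∫ x, 2 * φ x * (1 + ‖x‖ ^ 2)⁻¹ * fderiv ℝ φ x x =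
      2 * ∫ x, φ x * (1 + ‖x‖ ^ 2)⁻¹ * fderiv ℝ φ x x := by
    rw [← integral_const_mul]; congr 1; ext x; ring
  rw [e2] at hzero
  have hI0 : 0 ≤ ∫ x, φ x ^ 2 * (1 + ‖x‖ ^ 2)⁻¹ := integral_nonneg fun x => by positivity
  set I := ∫ x, φ x ^ 2 * (1 + ‖x‖ ^ 2)⁻¹
  set b := √(∫ x, ‖gradient φ x‖ ^ 2)
  have hb : 0 ≤ b := Real.sqrt_nonneg _
  have hN' : (0:ℝ) < N - 2 := by
    have : (3:ℝ) ≤ N := by exact_mod_cast hN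
    linarith
  have hsI := Real.sq_sqrt hI0
  have ha := Real.sqrt_nonneg I
  have h4 := (abs_le.1 hcs).1
  unfold cN
  rw [div_mul_eq_mul_div, le_div_iff₀ hN']
  rcases ha.eq_or_lt with h0 | h0
  · rw [← h0]; simp; exact hb
  · refine le_of_mul_le_mul_left ?_ h0
    nlinarith

lemma aux_memV {Ω : Set (Euc N)} {v : Euc N → Euc N} :
    MemL2V Ω 0 v ↔ MemLp v 2 (volume.restrict Ω) := by
  unfold MemL2V
  constructor
  · rintro ⟨h1, h2⟩
    rw [memLp_two_iff_integrable_sq_norm h1]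
    simpa using h2
  · intro h
    refine ⟨h.1, ?_⟩
    have := (memLp_two_iff_integrable_sq_norm h.1).1 h
    simpa using this

lemma aux_measA {Ω : Set (Euc N)} (M : Coeff N Ω) {v : Euc N → Euc N}
    (hv : AEStronglyMeasurable v (volume.restrict Ω)) :
    AEStronglyMeasurable (fun x => M.A x (v x)) (volume.restrict Ω) := by
  have e : (fun x => M.A x (v x)) =
      fun x => ∑ i, (v x i) • M.A x (EuclideanSpace.single i 1) := by
    ext1 x
    have h := congrArg (M.A x) ((EuclideanSpace.basisFun (Fin N) ℝ).sum_repr (v x))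
    rw [← h]
    simp only [map_sum, map_smul]
    simp
  rw [e]
  refine Finset.aestronglyMeasurable_fun_sum _ fun i _ => ?_
  have : AEStronglyMeasurable (fun x => v x i) (volume.restrict Ω) :=
    (EuclideanSpace.proj (𝕜 := ℝ) i : Euc N →L[ℝ] ℝ).continuous.comp_aestronglyMeasurable hv
  exact this.smul (M.meas _)

lemma aux_memA {Ω : Set (Euc N)} (M : Coeff N Ω) {v : Euc N → Euc N}
    (hv : MemLp v 2 (volume.restrict Ω)) :
    MemLp (fun x => M.A x (v x)) 2 (volume.restrict Ω) := by
  obtain ⟨C, hC⟩ := M.bdd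
  refine MemLp.of_le_mul (c := C) hv (aux_measA M hv.1) ?_
  filter_upwards [hC] with x hx using hx _

lemma aux_int_inner {Ω : Set (Euc N)} {v w : Euc N → Euc N}
    (hv : MemLp v 2 (volume.restrict Ω)) (hw : MemLp w 2 (volume.restrict Ω)) :
    Integrable (fun x => ⟪v x, w x⟫) (volume.restrict Ω) := by
  have h1 := (memLp_two_iff_integrable_sq_norm hv.1).1 hv
  have h2 := (memLp_two_iff_integrable_sq_norm hw.1).1 hw
  refine (h1.add h2).mono' (hv.1.inner hw.1) (Eventually.of_forall fun x => ?_)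
  have := norm_inner_le_norm (𝕜 := ℝ) (v x) (w x)
  simp only [Pi.add_apply]
  nlinarith [sq_nonneg (‖v x‖ - ‖w x‖), sq_nonneg (‖v x‖), sq_nonneg (‖w x‖)]

lemma aux_int_mul {Ω : Set (Euc N)} {f g : Euc N → ℝ} (hf : MemL2 Ω 1 f) (hg : MemL2 Ω (-1) g) :
    Integrable (fun x => f x * g x) (volume.restrict Ω) := by
  refine (hf.2.add hg.2).mono' (hf.1.mul hg.1) (Eventually.of_forall fun x => ?_)
  simp only [Pi.add_apply, Real.rpow_one, Real.rpow_neg_one, Real.norm_eq_abs]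
  have hp : (0:ℝ) < 1 + ‖x‖ ^ 2 := by positivity
  have e : |f x * g x| ^ 2 = ((1 + ‖x‖ ^ 2) * f x ^ 2) * ((1 + ‖x‖ ^ 2)⁻¹ * g x ^ 2) := by
    rw [sq_abs]; field_simp
  have a : 0 ≤ (1 + ‖x‖ ^ 2) * f x ^ 2 := by positivity
  have b : 0 ≤ (1 + ‖x‖ ^ 2)⁻¹ * g x ^ 2 := by positivity
  exact abs_le_of_sq_le_sq' (by rw [e]; nlinarith) (by positivity) |>.2

lemma aux_cs_mul {Ω : Set (Euc N)} {f g : Euc N → ℝ} (hf : MemL2 Ω 1 f) (hg : MemL2 Ω (-1) g) :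
    |∫ x in Ω, f x * g x| ≤ nrmL2 Ω 1 f * nrmL2 Ω (-1) g := by
  refine aux_cs hf.2 hg.2 (Eventually.of_forall fun x => by positivity)
    (Eventually.of_forall fun x => by positivity) (Eventually.of_forall fun x => ?_)
  rw [← Real.sqrt_mul (by positivity)]
  refine Real.abs_le_sqrt (le_of_eq ?_)
  have hp : (0:ℝ) < 1 + ‖x‖ ^ 2 := by positivity
  rw [Real.rpow_one, Real.rpow_neg_one]
  field_simp

lemma aux_memL2_add {Ω : Set (Euc N)} {f g : Euc N → ℝ} (hf : MemL2 Ω 1 f) (hg : MemL2 Ω 1 g) :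
    MemL2 Ω 1 (fun x => f x + g x) := by
  have hm := hf.1.add hg.1
  refine ⟨hm, ((hf.2.add hg.2).const_mul 2).mono' ?_ (Eventually.of_forall fun x => ?_)⟩
  · have : Continuous (fun x : Euc N => (1 + ‖x‖ ^ 2) ^ (1:ℝ)) := by
      simp only [Real.rpow_one]; fun_prop
    exact this.aestronglyMeasurable.mul (hm.pow 2)
  · rw [Real.norm_of_nonneg (by positivity)]
    simp only [Pi.add_apply]
    have hp : 0 ≤ (1 + ‖x‖ ^ 2) ^ (1:ℝ) := by positivity
    nlinarith [mul_nonneg hp (sq_nonneg (f x - g x))]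

lemma aux_psd_cs (B : Euc N →L[ℝ] Euc N) (hs : ∀ ξ η, ⟪B ξ, η⟫ = ⟪ξ, B η⟫)
    (hp : ∀ ξ, 0 ≤ ⟪B ξ, ξ⟫) (v w : Euc N) :
    |⟪B v, w⟫| ≤ √⟪B v, v⟫ * √⟪B w, w⟫ := by
  rw [← Real.sqrt_mul (hp v)]
  refine Real.abs_le_sqrt ?_
  have h : ∀ t : ℝ, 0 ≤ ⟪B w, w⟫ * (t * t) + (2 * ⟪B v, w⟫) * t + ⟪B v, v⟫ := by
    intro t
    have := hp (v + t • w)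
    have e : ⟪B w, v⟫ = ⟪B v, w⟫ := by rw [hs w v, real_inner_comm]
    simp only [map_add, map_smul, inner_add_left, inner_add_right, real_inner_smul_left,
      real_inner_smul_right, e] at this
    linarith
  have := discrim_le_zero h
  unfold discrim at this
  nlinarith

lemma aux_nonneg {Ω : Set (Euc N)} (M : Coeff N Ω) :
    ∀ᵐ x ∂(volume.restrict Ω), ∀ ξ : Euc N, 0 ≤ ⟪M.A x ξ, ξ⟫ := by
  filter_upwards [M.coer] with x hx ξ
  exact le_trans (by positivity) (hx ξ)

lemma aux_csA {Ω : Set (Euc N)} (M : Coeff N Ω) {v w : Euc N → Euc N}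
    (hv : MemLp v 2 (volume.restrict Ω)) (hw : MemLp w 2 (volume.restrict Ω)) :
    |∫ x in Ω, ⟪M.A x (v x), w x⟫| ≤ nrmA Ω M.A v * nrmA Ω M.A w := by
  refine aux_cs (aux_int_inner (aux_memA M hv) hv) (aux_int_inner (aux_memA M hw) hw) ?_ ?_ ?_
  · filter_upwards [aux_nonneg M] with x hx using hx _
  · filter_upwards [aux_nonneg M] with x hx using hx _
  · filter_upwards [aux_nonneg M] with x hx using aux_psd_cs _ (M.symm x) hx _ _

lemma aux_sqA_nonneg {Ω : Set (Euc N)} (M : Coeff N Ω) (v : Euc N → Euc N) :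
    0 ≤ sqA Ω M.A v := by
  refine integral_nonneg_of_ae ?_
  filter_upwards [aux_nonneg M] with x hx using hx _

lemma aux_nrmA_le {Ω : Set (Euc N)} (M : Coeff N Ω) : ∃ C : ℝ, ∀ v : Euc N → Euc N,
    MemLp v 2 (volume.restrict Ω) → nrmA Ω M.A v ≤ C * nrmL2V Ω 0 v := by
  obtain ⟨C, hC⟩ := M.bdd
  refine ⟨√|C|, fun v hv => ?_⟩
  unfold nrmA nrmL2V
  rw [← Real.sqrt_mul (abs_nonneg _)]
  refine Real.sqrt_le_sqrt ?_
  unfold sqA ipA sqL2V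
  rw [← integral_const_mul]
  have h1 := (memLp_two_iff_integrable_sq_norm hv.1).1 hv
  refine integral_mono_ae (aux_int_inner (aux_memA M hv) hv) (by simpa using h1.const_mul _) ?_
  filter_upwards [hC] with x hx
  simp only [Real.rpow_zero, one_mul]
  have h2 := real_inner_le_norm (M.A x (v x)) (v x)
  have h3 := mul_le_mul_of_nonneg_right (hx (v x)) (norm_nonneg (v x))
  have h4 := mul_le_mul_of_nonneg_right (le_abs_self C) (sq_nonneg ‖v x‖)
  nlinarith

lemma aux_le_nrmA {Ω : Set (Euc N)} (M : Coeff N Ω) {v : Euc N → Euc N}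
    (hv : MemLp v 2 (volume.restrict Ω)) : nrmL2V Ω 0 v ≤ M.α * nrmA Ω M.A v := by
  unfold nrmA nrmL2V
  have hα := M.α_pos
  have hs : M.α * √(sqA Ω M.A v) = √(M.α ^ 2 * sqA Ω M.A v) := by
    rw [Real.sqrt_mul (by positivity), Real.sqrt_sq hα.le]
  rw [hs]
  refine Real.sqrt_le_sqrt ?_
  unfold sqA ipA sqL2V
  rw [← integral_const_mul]
  have h1 := (memLp_two_iff_integrable_sq_norm hv.1).1 hv
  refine integral_mono_ae (by simpa using h1)
    ((aux_int_inner (aux_memA M hv) hv).const_mul _) ?_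
  filter_upwards [M.coer] with x hx
  simp only [Real.rpow_zero, one_mul]
  have := mul_le_mul_of_nonneg_left (hx (v x)) (sq_nonneg M.α)
  refine le_trans (le_of_eq ?_) this
  field_simp

lemma aux_test {Ω : Set (Euc N)} (hN : 3 ≤ N) {φ : Euc N → ℝ} (h : IsTest Ω φ) :
    MemL2 Ω (-1) φ ∧ MemLp (gradient φ) 2 (volume.restrict Ω) ∧
      nrmL2 Ω (-1) φ ≤ cN N * nrmL2V Ω 0 (gradient φ) := by
  obtain ⟨h1, hc, hs⟩ := h
  have hφ : ContDiff ℝ 1 φ := h1.of_le (by exact_mod_cast le_top)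
  have hφc := hφ.continuous
  have hgc : Continuous (gradient φ) :=
    (InnerProductSpace.toDual ℝ (Euc N)).symm.continuous.comp (hφ.continuous_fderiv one_ne_zero)
  have hgs : HasCompactSupport (gradient φ) := by
    refine (hc.fderiv ℝ).mono ?_
    intro x hx h
    apply hx
    simp [gradient, h]
  have h0 : ∀ x, x ∉ Ω → φ x = 0 := fun x hx => image_eq_zero_of_notMem_tsupport fun h => hx (hs h)
  have hg0 : ∀ x, x ∉ Ω → gradient φ x = 0 := by
    intro x hx
    have : fderiv ℝ φ x = 0 := by
      by_contra hne
      exact hx (hs (support_fderiv_subset ℝ hne))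
    simp [gradient, this]
  have hpos : ∀ x : Euc N, (1 + ‖x‖ ^ 2) ≠ 0 := fun x => by positivity
  have hI : Integrable (fun x => φ x ^ 2 * (1 + ‖x‖ ^ 2)⁻¹) := by
    refine Continuous.integrable_of_hasCompactSupport ?_ (hc.mono ?_)
    · exact (hφc.pow 2).mul (Continuous.inv₀ (by fun_prop) hpos)
    · intro x hx h; exact hx (by simp [h])
  have ew : ∀ x, (1 + ‖x‖ ^ 2) ^ (-1:ℝ) * φ x ^ 2 = φ x ^ 2 * (1 + ‖x‖ ^ 2)⁻¹ := by
    intro x; rw [Real.rpow_neg_one, mul_comm]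
  refine ⟨⟨hφc.aestronglyMeasurable, ?_⟩, (hgc.memLp_of_hasCompactSupport hgs).restrict _, ?_⟩
  · simp_rw [ew]; exact hI.integrableOn
  · have := aux_hardy0 hN hφ hc
    unfold nrmL2 nrmL2V sqL2 sqL2V
    simp_rw [ew]
    simp only [Real.rpow_zero, one_mul]
    rw [setIntegral_eq_integral_of_forall_compl_eq_zero (fun x hx => by simp [h0 x hx]),
      setIntegral_eq_integral_of_forall_compl_eq_zero (fun x hx => by simp [hg0 x hx])]
    exact this

/-- Sharpness of the conforming upper bound: `v̂ = A∇û` realizes equality, and the infimum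
of the majorant equals `‖∇(û − ũ)‖_A` and is attained. -/
theorem stmt_5 (Ω : Set (Euc N)) (hΩ : IsOpen Ω) (hN : 3 ≤ N) (M : Coeff N Ω)
    (f : Euc N → ℝ) (hf : MemL2 Ω 1 f)
    (uh : Euc N → ℝ) (gu : Euc N → Euc N)
    (huh : MemL2 Ω (-1) uh) (hgu : MemL2V Ω 0 gu) (hguw : IsWeakGrad Ω uh gu)
    (hweak : ∀ φ : Euc N → ℝ, IsTest Ω φ →
      (∫ x in Ω, ⟪M.A x (gu x), gradient φ x⟫) = ∫ x in Ω, f x * φ x)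
    (ut : Euc N → ℝ) (gt : Euc N → Euc N)
    (hut : MemL2 Ω (-1) ut) (hgt : MemL2V Ω 0 gt) (hgtw : IsWeakGrad Ω ut gt)
    (he : MemH10 Ω (fun x => uh x - ut x) (fun x => gu x - gt x)) :
    MemL2V Ω 0 (fun x => M.A x (gu x)) ∧
    IsWeakDiv Ω (fun x => M.A x (gu x)) (fun x => - f x) ∧
    MemL2 Ω 1 (fun x => - f x) ∧
    (∀ w : Euc N → Euc N, IsAInv Ω M.A (fun x => M.A x (gu x)) w →
      M.α * cN N * nrmL2 Ω 1 (fun x => f x + - f x) + nrmA Ω M.A (fun x => gt x - w x) =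
        nrmA Ω M.A (fun x => gu x - gt x)) ∧
    IsLeast {r : ℝ | ∃ (v : Euc N → Euc N) (dv : Euc N → ℝ) (w : Euc N → Euc N),
        MemL2V Ω 0 v ∧ MemL2 Ω 1 dv ∧ IsWeakDiv Ω v dv ∧ IsAInv Ω M.A v w ∧
        r = M.α * cN N * nrmL2 Ω 1 (fun x => f x + dv x) +
          nrmA Ω M.A (fun x => gt x - w x)}
      (nrmA Ω M.A (fun x => gu x - gt x)) := by
  have hgu' := aux_memV.1 hgu
  have hgt' := aux_memV.1 hgt
  have hα := M.α_pos
  have hz : nrmL2 Ω 1 (fun x => f x + - f x) = 0 := by simp [nrmL2, sqL2]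
  have c1 : MemL2V Ω 0 (fun x => M.A x (gu x)) := aux_memV.2 (aux_memA M hgu')
  have c2 : IsWeakDiv Ω (fun x => M.A x (gu x)) (fun x => - f x) := by
    intro φ hφ
    rw [hweak φ hφ, ← integral_neg]
    simp
  have c3 : MemL2 Ω 1 (fun x => - f x) := ⟨hf.1.neg, by simpa using hf.2⟩
  have c4 : ∀ w : Euc N → Euc N, IsAInv Ω M.A (fun x => M.A x (gu x)) w →
      M.α * cN N * nrmL2 Ω 1 (fun x => f x + - f x) + nrmA Ω M.A (fun x => gt x - w x) =
        nrmA Ω M.A (fun x => gu x - gt x) := by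
    rintro w ⟨hw, hwe⟩
    rw [hz, mul_zero, zero_add]
    unfold nrmA sqA ipA
    congr 1
    refine integral_congr_ae ?_
    filter_upwards [hwe, M.coer] with x hx hc
    have hd : M.A x (w x - gu x) = 0 := by rw [map_sub, hx, sub_self]
    have h1 := hc (w x - gu x)
    rw [hd, inner_zero_left] at h1
    have h2 : 0 < M.α⁻¹ ^ 2 := by positivity
    have h3 : ‖w x - gu x‖ ^ 2 = 0 := le_antisymm (by
      by_contra hcon
      push Not at hcon
      have := mul_pos h2 hcon
      linarith) (by positivity)
    have h4 : w x = gu x := by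
      rw [pow_eq_zero_iff two_ne_zero, norm_eq_zero, sub_eq_zero] at h3
      exact h3
    rw [h4, ← neg_sub (gu x) (gt x), map_neg, inner_neg_neg]
  refine ⟨c1, c2, c3, c4, ⟨fun x => M.A x (gu x), fun x => - f x, gu, c1, c3, c2,
    ⟨hgu, Eventually.of_forall fun x => rfl⟩,
    (c4 gu ⟨hgu, Eventually.of_forall fun x => rfl⟩).symm⟩, ?_⟩
  rintro r ⟨v, dv, w, hv, hdv, hdiv, ⟨hw, hwe⟩, rfl⟩
  have hv' := aux_memV.1 hv
  have hw' := aux_memV.1 hw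
  obtain ⟨-, -, -, φ, hφ, -, hlim⟩ := he
  have hN2 : (0:ℝ) ≤ cN N := by
    have : (3:ℝ) ≤ N := by exact_mod_cast hN
    unfold cN
    exact div_nonneg (by norm_num) (by linarith)
  have hfd := aux_memL2_add hf hdv
  set R := M.α * cN N * nrmL2 Ω 1 (fun x => f x + dv x) +
          nrmA Ω M.A (fun x => gt x - w x) with hR
  have hR0 : 0 ≤ R := by
    have h1 : 0 ≤ nrmL2 Ω 1 (fun x => f x + dv x) := Real.sqrt_nonneg _
    have h2 : 0 ≤ nrmA Ω M.A (fun x => gt x - w x) := Real.sqrt_nonneg _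
    positivity
  have he' : MemLp (fun x => gu x - gt x) 2 (volume.restrict Ω) := hgu'.sub hgt'
  have hgw' : MemLp (fun x => gt x - w x) 2 (volume.restrict Ω) := hgt'.sub hw'
  have key : ∀ n, ipA Ω M.A (fun x => gu x - gt x) (gradient (φ n)) ≤
      R * nrmA Ω M.A (gradient (φ n)) := by
    intro n
    obtain ⟨t1, t2, t3⟩ := aux_test hN (hφ n)
    have i1 := aux_int_inner (aux_memA M hgu') t2
    have i2 := aux_int_inner hv' t2
    have i3 := aux_int_inner (aux_memA M hgw') t2
    have e1 : ipA Ω M.A (fun x => gu x - gt x) (gradient (φ n)) =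
        (∫ x in Ω, (f x + dv x) * φ n x) -
          ∫ x in Ω, ⟪M.A x (gt x - w x), gradient (φ n) x⟫ := by
      have e2 : ipA Ω M.A (fun x => gu x - gt x) (gradient (φ n)) =
          ∫ x in Ω, (⟪M.A x (gu x), gradient (φ n) x⟫ - ⟪v x, gradient (φ n) x⟫
            - ⟪M.A x (gt x - w x), gradient (φ n) x⟫) := by
        refine integral_congr_ae ?_
        filter_upwards [hwe] with x hx
        rw [← hx, ← inner_sub_left, ← inner_sub_left, ← map_sub, ← map_sub]
        congr 2
        abel
      have e3 : ∫ x in Ω, (f x + dv x) * φ n x =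
          (∫ x in Ω, f x * φ n x) + ∫ x in Ω, dv x * φ n x := by
        rw [← integral_add (aux_int_mul hf t1) (aux_int_mul hdv t1)]
        congr 1; ext x; ring
      have i4 : Integrable (fun x => ⟪M.A x (gu x), gradient (φ n) x⟫ - ⟪v x, gradient (φ n) x⟫)
        (volume.restrict Ω) := i1.sub i2
      rw [e2, integral_sub i4 i3, integral_sub i1 i2, hweak _ (hφ n), hdiv _ (hφ n), e3]
      ring
    have b1 := (abs_le.1 (aux_cs_mul hfd t1)).2
    have b2 := (abs_le.1 (aux_csA M hgw' t2)).1
    have b3 := aux_le_nrmA M t2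
    have n1 : 0 ≤ nrmL2 Ω 1 (fun x => f x + dv x) := Real.sqrt_nonneg _
    have b4 : nrmL2 Ω (-1) (φ n) ≤ cN N * (M.α * nrmA Ω M.A (gradient (φ n))) :=
      t3.trans (mul_le_mul_of_nonneg_left b3 hN2)
    have b5 := mul_le_mul_of_nonneg_left b4 n1
    rw [e1, hR]
    linarith
  obtain ⟨C, hC⟩ := aux_nrmA_le M
  have hdm : ∀ n, MemLp (fun x => (gu x - gt x) - gradient (φ n) x) 2 (volume.restrict Ω) :=
    fun n => he'.sub (aux_test hN (hφ n)).2.1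
  have hl1 : Tendsto (fun n => nrmA Ω M.A (fun x => (gu x - gt x) - gradient (φ n) x)) atTop (𝓝 0) := by
    refine squeeze_zero (fun n => Real.sqrt_nonneg _) (fun n => hC _ (hdm n)) ?_
    simpa using hlim.const_mul C
  have hl2 : Tendsto (fun n => ipA Ω M.A (fun x => gu x - gt x)
      (fun x => (gu x - gt x) - gradient (φ n) x)) atTop (𝓝 0) := by
    refine squeeze_zero_norm (fun n => aux_csA M he' (hdm n)) ?_
    simpa using hl1.const_mul (nrmA Ω M.A (fun x => gu x - gt x))
  have hip : ∀ n, ipA Ω M.A (fun x => gu x - gt x) (gradient (φ n)) =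
      sqA Ω M.A (fun x => gu x - gt x) - ipA Ω M.A (fun x => gu x - gt x)
      (fun x => (gu x - gt x) - gradient (φ n) x) := by
    intro n
    unfold sqA ipA
    rw [← integral_sub (aux_int_inner (aux_memA M he') he')
      (aux_int_inner (aux_memA M he') (hdm n))]
    congr 1; ext x
    rw [← inner_sub_right]
    congr 1
    abel
  have hsq : ∀ n, sqA Ω M.A (gradient (φ n)) =
      sqA Ω M.A (fun x => gu x - gt x) - 2 * ipA Ω M.A (fun x => gu x - gt x)
      (fun x => (gu x - gt x) - gradient (φ n) x) +
      nrmA Ω M.A (fun x => (gu x - gt x) - gradient (φ n) x) ^ 2 := by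
    intro n
    unfold nrmA
    rw [Real.sq_sqrt (aux_sqA_nonneg M _)]
    unfold sqA ipA
    have j1 := aux_int_inner (aux_memA M he') he'
    have j2 := aux_int_inner (aux_memA M he') (hdm n)
    have j3 := aux_int_inner (aux_memA M (hdm n)) (hdm n)
    have j4 := j1.sub (j2.const_mul 2)
    rw [← integral_const_mul, ← integral_sub j1 (j2.const_mul 2)]
    refine Eq.trans ?_ (integral_add j4 j3)
    congr 1; ext x
    have e := M.symm x (gu x - gt x) (gu x - gt x - gradient (φ n) x)
    have e0 : gradient (φ n) x = (gu x - gt x) - (gu x - gt x - gradient (φ n) x) := by abel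
    simp only [Pi.sub_apply]
    generalize gu x - gt x - gradient (φ n) x = d at e e0 ⊢
    generalize gu x - gt x = c at e e0 ⊢
    rw [e0]
    rw [map_sub, inner_sub_left, inner_sub_right, inner_sub_right, real_inner_comm c (M.A x d), ← e]
    ring
  have L1 : Tendsto (fun n => ipA Ω M.A (fun x => gu x - gt x) (gradient (φ n))) atTop
      (𝓝 (sqA Ω M.A (fun x => gu x - gt x))) := by
    simp_rw [hip]
    simpa using hl2.const_sub (sqA Ω M.A (fun x => gu x - gt x))
  have L2 : Tendsto (fun n => sqA Ω M.A (gradient (φ n))) atTop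
      (𝓝 (sqA Ω M.A (fun x => gu x - gt x))) := by
    simp_rw [hsq]
    simpa using ((hl2.const_mul 2).const_sub (sqA Ω M.A (fun x => gu x - gt x))).add (hl1.pow 2)
  have L3 : Tendsto (fun n => R * nrmA Ω M.A (gradient (φ n))) atTop
      (𝓝 (R * nrmA Ω M.A (fun x => gu x - gt x))) :=
    ((Real.continuous_sqrt.tendsto _).comp L2).const_mul R
  have fin := le_of_tendsto_of_tendsto' L1 L3 key
  have hs : nrmA Ω M.A (fun x => gu x - gt x) ^ 2 = sqA Ω M.A (fun x => gu x - gt x) :=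
    Real.sq_sqrt (aux_sqA_nonneg M _)
  have hn : 0 ≤ nrmA Ω M.A (fun x => gu x - gt x) := Real.sqrt_nonneg _
  rcases hn.eq_or_lt with h0 | h0
  · rw [← h0]; exact hR0
  · refine le_of_mul_le_mul_right ?_ h0
    rw [← hs] at fin
    linarith
end
end

section
/- Conforming lower bound (minorant): let ũ ∈ L²₋₁(Ω) have weak gradient ∇ũ ∈ L²(Ω;ℝ^N) with e := û − ũ ∈ H¹°₋₁(Ω). Then for every u ∈ H¹°₋₁(Ω), ‖∇e‖²_A ≥ M₋(∇ũ,u) := 2∫_Ω f u dx − ∫_Ω A∇(2ũ + u)·∇u dx. -/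
open MeasureTheory Filter Topology
open scoped RealInnerProductSpace

noncomputable section

variable {N : ℕ}

theorem aux_cs_s6 {X : Type*} [MeasurableSpace X] {μ : Measure X} {a b : X → ℝ}
    (ha : MemLp a 2 μ) (hb : MemLp b 2 μ) :
    ∫ x, |a x| * |b x| ∂μ ≤ Real.sqrt (∫ x, a x ^ 2 ∂μ) * Real.sqrt (∫ x, b x ^ 2 ∂μ) := by
  have h := integral_mul_le_Lp_mul_Lq_of_nonneg (μ := μ) (p := 2) (q := 2)
    (f := fun x => |a x|) (g := fun x => |b x|) Real.HolderConjugate.two_two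
    (ae_of_all _ fun x => abs_nonneg _) (ae_of_all _ fun x => abs_nonneg _)
    (by simpa using ha.norm) (by simpa using hb.norm)
  simpa [Real.sqrt_eq_rpow] using h

theorem aux_memLpV (Ω : Set (Euc N)) {v : Euc N → Euc N} (h : MemL2V Ω 0 v) :
    MemLp v 2 (volume.restrict Ω) := by
  refine (memLp_two_iff_integrable_sq_norm h.1).2 ?_
  simpa using h.2

theorem aux_w (x : Euc N) : (0:ℝ) < 1 + ‖x‖ ^ 2 := by positivity

theorem aux_sq (x : Euc N) (s t : ℝ) :
    ((1 + ‖x‖ ^ 2) ^ (s / 2) * t) ^ 2 = (1 + ‖x‖ ^ 2) ^ s * t ^ 2 := by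
  rw [mul_pow, ← Real.rpow_natCast, ← Real.rpow_mul (aux_w x).le]
  norm_num

theorem aux_cont (s : ℝ) : Continuous (fun x : Euc N => (1 + ‖x‖ ^ 2) ^ s) :=
  Continuous.rpow_const (by fun_prop) fun x => Or.inl (aux_w x).ne'

theorem aux_memLp (Ω : Set (Euc N)) {s : ℝ} {v : Euc N → ℝ} (h : MemL2 Ω s v) :
    MemLp (fun x => (1 + ‖x‖ ^ 2) ^ (s / 2) * v x) 2 (volume.restrict Ω) := by
  refine (memLp_two_iff_integrable_sq ?_).2 ?_
  · exact (aux_cont _).aestronglyMeasurable.mul h.1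
  · simp only [aux_sq]
    exact h.2

theorem aux_test_s6 (Ω : Set (Euc N)) {φ : Euc N → ℝ} (h : IsTest Ω φ) (s : ℝ) :
    MemLp (fun x => (1 + ‖x‖ ^ 2) ^ s * φ x) 2 (volume.restrict Ω) := by
  have hc : Continuous (fun x => (1 + ‖x‖ ^ 2) ^ s * φ x) := (aux_cont _).mul h.1.continuous
  exact (hc.memLp_of_hasCompactSupport h.2.1.mul_left).restrict Ω

theorem aux_testG (Ω : Set (Euc N)) {φ : Euc N → ℝ} (h : IsTest Ω φ) :
    MemLp (gradient φ) 2 (volume.restrict Ω) := by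
  have hc : Continuous (gradient φ) := by
    unfold gradient
    exact (LinearIsometryEquiv.continuous _).comp (h.1.continuous_fderiv (by simp))
  have hs : HasCompactSupport (gradient φ) := by
    have := h.2.1.fderiv (𝕜 := ℝ)
    exact this.comp_left (g := (InnerProductSpace.toDual ℝ (Euc N)).symm) (map_zero _)
  exact (hc.memLp_of_hasCompactSupport hs).restrict Ω

theorem aux_A (Ω : Set (Euc N)) (M : Coeff N Ω) {v : Euc N → Euc N}
    (h : MemLp v 2 (volume.restrict Ω)) :
    MemLp (fun x => M.A x (v x)) 2 (volume.restrict Ω) := by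
  obtain ⟨C, hC⟩ := M.bdd
  refine h.of_le_mul (c := C) ?_ (hC.mono fun x hx => hx _)
  have : (fun x => M.A x (v x)) =
      fun x => ∑ i, (v x i) • M.A x (EuclideanSpace.basisFun (Fin N) ℝ i) := by
    ext1 x
    conv_lhs => rw [← (EuclideanSpace.basisFun (Fin N) ℝ).sum_repr (v x)]
    simp only [map_sum, map_smul, EuclideanSpace.basisFun_repr]
  rw [this]
  refine Finset.aestronglyMeasurable_fun_sum _ fun i _ => ?_
  have hi : AEStronglyMeasurable (fun x => v x i) (volume.restrict Ω) :=
    (show Continuous (fun y : Euc N => y i) by fun_prop).comp_aestronglyMeasurable h.1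
  exact hi.smul (M.meas _)

theorem aux_int (Ω : Set (Euc N)) {v w : Euc N → Euc N}
    (hv : MemLp v 2 (volume.restrict Ω)) (hw : MemLp w 2 (volume.restrict Ω)) :
    Integrable (fun x => ⟪v x, w x⟫) (volume.restrict Ω) := by
  refine (hv.norm.integrable_mul hw.norm).mono (hv.1.inner hw.1) (ae_of_all _ fun x => ?_)
  simpa using abs_real_inner_le_norm (v x) (w x)

theorem aux_weak (Ω : Set (Euc N)) (M : Coeff N Ω)
    (f : Euc N → ℝ) (hf : MemL2 Ω 1 f) (gu : Euc N → Euc N) (hgu : MemL2V Ω 0 gu)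
    (hweak : ∀ φ : Euc N → ℝ, IsTest Ω φ →
      (∫ x in Ω, ⟪M.A x (gu x), gradient φ x⟫) = ∫ x in Ω, f x * φ x)
    (u : Euc N → ℝ) (g : Euc N → Euc N) (h : MemH10 Ω u g) :
    (∫ x in Ω, ⟪M.A x (gu x), g x⟫) = ∫ x in Ω, f x * u x := by
  obtain ⟨hu, hg, -, φ, hφ, h1, h2⟩ := h
  have hA := aux_A Ω M (aux_memLpV Ω hgu)
  have hg' := aux_memLpV Ω hg
  have hF := aux_memLp Ω hf
  have key : ∀ (x : Euc N) (t : ℝ), f x * t =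
      ((1 + ‖x‖ ^ 2) ^ ((1:ℝ) / 2) * f x) * ((1 + ‖x‖ ^ 2) ^ ((-1:ℝ) / 2) * t) := by
    intro x t
    have : (1 + ‖x‖ ^ 2) ^ ((1:ℝ) / 2) * (1 + ‖x‖ ^ 2) ^ ((-1:ℝ) / 2) = 1 := by
      rw [← Real.rpow_add (aux_w x)]; norm_num
    linear_combination (-f x * t) * this
  have hU := aux_memLp Ω hu
  have iu : Integrable (fun x => f x * u x) (volume.restrict Ω) := by
    simp only [key]; exact hF.integrable_mul hU
  have iφ : ∀ n, Integrable (fun x => f x * φ n x) (volume.restrict Ω) := by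
    intro n
    simp only [key]; exact hF.integrable_mul (aux_test_s6 Ω (hφ n) _)
  have e1 : ∀ n, |(∫ x in Ω, f x * u x) - ∫ x in Ω, f x * φ n x| ≤
      Real.sqrt (∫ x in Ω, ((1 + ‖x‖ ^ 2) ^ ((1:ℝ) / 2) * f x) ^ 2) *
        nrmL2 Ω (-1) (fun x => u x - φ n x) := by
    intro n
    rw [← integral_sub iu (iφ n)]
    refine (abs_integral_le_integral_abs).trans ?_
    have hd : MemLp (fun x => (1 + ‖x‖ ^ 2) ^ ((-1:ℝ) / 2) * (u x - φ n x)) 2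
        (volume.restrict Ω) := by
      simp only [mul_sub]
      exact hU.sub (aux_test_s6 Ω (hφ n) _)
    have := aux_cs_s6 hF hd
    simp only [aux_sq (s := -1)] at this
    refine le_trans (le_of_eq ?_) this
    congr 1
    ext1 x
    rw [← abs_mul, ← key, mul_sub]
  have e2 : ∀ n, |(∫ x in Ω, ⟪M.A x (gu x), g x⟫) - ∫ x in Ω, ⟪M.A x (gu x), gradient (φ n) x⟫| ≤
      Real.sqrt (∫ x in Ω, ‖M.A x (gu x)‖ ^ 2) *
        nrmL2V Ω 0 (fun x => g x - gradient (φ n) x) := by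
    intro n
    have hG := aux_testG Ω (hφ n)
    rw [← integral_sub (aux_int Ω hA hg') (aux_int Ω hA hG)]
    refine (abs_integral_le_integral_abs).trans ?_
    have := aux_cs_s6 hA.norm (hg'.sub hG).norm
    simp only [abs_norm, Pi.sub_apply] at this
    have h3 : nrmL2V Ω 0 (fun x => g x - gradient (φ n) x) =
      Real.sqrt (∫ x in Ω, ‖g x - gradient (φ n) x‖ ^ 2) := by
      simp [nrmL2V, sqL2V]
    rw [h3]
    refine le_trans (integral_mono ?_ ?_ fun x => ?_) this
    · exact ((aux_int Ω hA hg').sub (aux_int Ω hA hG)).abs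
    · exact hA.norm.integrable_mul (hg'.sub hG).norm
    · simp only [← inner_sub_right]
      exact abs_real_inner_le_norm _ _
  have t := (h1.const_mul (Real.sqrt (∫ x in Ω, ((1 + ‖x‖ ^ 2) ^ ((1:ℝ) / 2) * f x) ^ 2))).add
    (h2.const_mul (Real.sqrt (∫ x in Ω, ‖M.A x (gu x)‖ ^ 2)))
  simp only [mul_zero, add_zero] at t
  have : |(∫ x in Ω, ⟪M.A x (gu x), g x⟫) - ∫ x in Ω, f x * u x| ≤ 0 := by
    refine ge_of_tendsto' t fun n => ?_
    have a := e1 n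
    have b := e2 n
    rw [hweak _ (hφ n)] at b
    have := abs_sub_le (∫ x in Ω, ⟪M.A x (gu x), g x⟫) (∫ x in Ω, f x * φ n x)
      (∫ x in Ω, f x * u x)
    rw [abs_sub_comm (∫ x in Ω, f x * φ n x)] at this
    linarith
  exact sub_eq_zero.1 (abs_nonpos_iff.1 this)

/-- Conforming lower bound (minorant):
`‖∇e‖²_A ≥ 2∫ f u − ∫ A∇(2ũ + u)·∇u` for all `u ∈ H¹°₋₁(Ω)`. -/
theorem stmt_6 (Ω : Set (Euc N)) (hΩ : IsOpen Ω) (hN : 3 ≤ N) (M : Coeff N Ω)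
    (f : Euc N → ℝ) (hf : MemL2 Ω 1 f)
    (uh : Euc N → ℝ) (gu : Euc N → Euc N)
    (huh : MemL2 Ω (-1) uh) (hgu : MemL2V Ω 0 gu) (hguw : IsWeakGrad Ω uh gu)
    (hweak : ∀ φ : Euc N → ℝ, IsTest Ω φ →
      (∫ x in Ω, ⟪M.A x (gu x), gradient φ x⟫) = ∫ x in Ω, f x * φ x)
    (ut : Euc N → ℝ) (gt : Euc N → Euc N)
    (hut : MemL2 Ω (-1) ut) (hgt : MemL2V Ω 0 gt) (hgtw : IsWeakGrad Ω ut gt)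
    (he : MemH10 Ω (fun x => uh x - ut x) (fun x => gu x - gt x)) :
    ∀ (u : Euc N → ℝ) (g : Euc N → Euc N), MemH10 Ω u g →
      2 * (∫ x in Ω, f x * u x) -
          (∫ x in Ω, ⟪M.A x ((2 : ℝ) • gt x + g x), g x⟫) ≤
        sqA Ω M.A (fun x => gu x - gt x) := by
  intro u g hug
  have hw := aux_weak Ω M f hf gu hgu hweak u g hug
  have lu := aux_memLpV Ω hgu
  have lt := aux_memLpV Ω hgt
  have lg := aux_memLpV Ω hug.2.1
  have i1 := aux_int Ω (aux_A Ω M (lu.sub lt)) (lu.sub lt)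
  have i2 := aux_int Ω (aux_A Ω M lu) lg
  have i3 := aux_int Ω (aux_A Ω M ((lt.const_smul (2:ℝ)).add lg)) lg
  have pos : 0 ≤ ∫ x in Ω, ⟪M.A x (gu x - gt x - g x), gu x - gt x - g x⟫ := by
    refine integral_nonneg_of_ae (M.coer.mono fun x hx => ?_)
    exact le_trans (by positivity) (hx _)
  have ex : (∫ x in Ω, ⟪M.A x (gu x - gt x - g x), gu x - gt x - g x⟫) =
      ∫ x in Ω, ((⟪M.A x (gu x - gt x), gu x - gt x⟫ - 2 * ⟪M.A x (gu x), g x⟫) +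
        ⟪M.A x ((2 : ℝ) • gt x + g x), g x⟫) := by
    congr 1
    ext1 x
    have s1 := M.symm x (g x) (gu x)
    have s2 := M.symm x (g x) (gt x)
    rw [real_inner_comm] at s1 s2
    simp only [map_sub, map_add, map_smul, inner_sub_left, inner_sub_right, inner_add_left,
      real_inner_smul_left]
    rw [real_inner_comm (gu x) (M.A x (g x)), real_inner_comm (gt x) (M.A x (g x))] 
    rw [real_inner_comm (M.A x (gu x)) (g x)] at s1
    rw [real_inner_comm (M.A x (gt x)) (g x)] at s2
    linarith
  simp only [Pi.sub_apply, Pi.add_apply, Pi.smul_apply] at i1 i3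
  have i4 : Integrable (fun x => ⟪M.A x (gu x - gt x), gu x - gt x⟫ - 2 * ⟪M.A x (gu x), g x⟫)
    (volume.restrict Ω) := i1.sub (i2.const_mul 2)
  rw [ex, integral_add i4 i3, integral_sub i1 (i2.const_mul 2),
    integral_const_mul, hw] at pos
  simp only [sqA, ipA]
  linarith
end
end

section
/- Quadratic form of the majorant: under the hypotheses of the conforming majorant estimate, for every β > 0 and every v ∈ L²(Ω;ℝ^N) possessing a weak divergence div v ∈ L²₊₁(Ω), ‖∇(û − ũ)‖²_A ≤ c_{N,α}²(1 + 1/β)‖f + div v‖²_{L²₊₁(Ω)} + (1 + β)‖∇ũ − A^{−1}v‖²_A. -/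
open MeasureTheory Filter Topology
open scoped RealInnerProductSpace

noncomputable section

variable {N : ℕ}

theorem aux_cs_s8 {X : Type*} [MeasurableSpace X] {μ : Measure X} {P Q R : X → ℝ}
    (hP : Integrable P μ) (hQ : Integrable Q μ) (hR : Integrable R μ)
    (h : ∀ᵐ x ∂μ, ∀ t : ℝ, 0 ≤ P x * (t * t) + 2 * R x * t + Q x) :
    (∫ x, R x ∂μ) ^ 2 ≤ (∫ x, P x ∂μ) * ∫ x, Q x ∂μ := by
  have key : ∀ t : ℝ, 0 ≤ (∫ x, P x ∂μ) * (t * t) + (2 * ∫ x, R x ∂μ) * t + ∫ x, Q x ∂μ := by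
    intro t
    have h1 : 0 ≤ ∫ x, (P x * (t * t) + 2 * R x * t + Q x) ∂μ :=
      integral_nonneg_of_ae (by filter_upwards [h] with x hx using hx t)
    have e1 : Integrable (fun x => P x * (t * t)) μ := hP.mul_const _
    have e2 : Integrable (fun x => 2 * R x * t) μ := (hR.const_mul 2).mul_const _
    have e3 : Integrable (fun x => P x * (t * t) + 2 * R x * t) μ := e1.add e2
    rw [integral_add e3 hQ, integral_add e1 e2, integral_mul_const, integral_mul_const,
      integral_const_mul] at h1
    exact h1
  have := discrim_le_zero key
  rw [discrim] at this
  nlinarith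

theorem aux_ibp {ψ : Euc N → ℝ} (hψ : ContDiff ℝ 1 ψ) (hc : HasCompactSupport ψ) :
    ∫ x, fderiv ℝ ψ x x = - (N * ∫ x, ψ x) := by
  have hd : Continuous (fderiv ℝ ψ) := hψ.continuous_fderiv (by norm_num)
  have hcd : HasCompactSupport (fderiv ℝ ψ) := hc.fderiv ℝ
  have hI : ∀ i : Fin N, Integrable
      (fun x : Euc N => fderiv ℝ ψ x (EuclideanSpace.single i 1) * x i) := by
    intro i
    apply Continuous.integrable_of_hasCompactSupport
    · fun_prop
    · apply hcd.mono
      intro x hx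
      simp only [Function.mem_support] at hx ⊢
      intro h0
      simp [h0] at hx
  have hfd : ∀ (i : Fin N) (x : Euc N),
      fderiv ℝ (fun x : Euc N => x i) x (EuclideanSpace.single i 1) = 1 := by
    intro i x
    have : (fun x : Euc N => x i) = (EuclideanSpace.proj i : Euc N →L[ℝ] ℝ) := by
      ext; simp
    rw [this, ContinuousLinearMap.fderiv]
    simp
  have hψi : Integrable ψ := hψ.continuous.integrable_of_hasCompactSupport hc
  have h1 : ∀ i : Fin N, ∫ x, fderiv ℝ ψ x (EuclideanSpace.single i 1) * x i = - ∫ x, ψ x := by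
    intro i
    have := integral_mul_fderiv_eq_neg_fderiv_mul_of_integrable (μ := (volume : Measure (Euc N)))
      (f := ψ) (g := fun x : Euc N => x i) (v := EuclideanSpace.single i 1) (hI i)
      (by simpa only [hfd, mul_one] using hψi)
      (by
        apply Continuous.integrable_of_hasCompactSupport
        · have := hψ.continuous
          fun_prop
        · exact hc.mul_right)
      (fun x _ => hψ.differentiable (by norm_num) x)
      (fun x _ => by fun_prop)
    simp only [hfd, mul_one] at this
    linarith
  have h2 : ∀ x : Euc N, fderiv ℝ ψ x x
      = ∑ i, fderiv ℝ ψ x (EuclideanSpace.single i 1) * x i := by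
    intro x
    have hx : x = ∑ i, x i • (EuclideanSpace.single i 1 : Euc N) := by
      have := (EuclideanSpace.basisFun (Fin N) ℝ).sum_repr x
      simpa using this.symm
    have h3 := congrArg (fderiv ℝ ψ x) hx
    rw [map_sum] at h3
    rw [h3]
    simp [mul_comm]
  simp_rw [h2]
  rw [integral_finsetSum _ (fun i _ => hI i)]
  simp [h1]

theorem aux_grad_zero {φ : Euc N → ℝ} {x : Euc N} (hx : x ∉ tsupport φ) : gradient φ x = 0 := by
  have : fderiv ℝ φ x = 0 := by
    by_contra h
    exact hx (support_fderiv_subset ℝ h)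
  simp [gradient, this]

theorem aux_grad_cont {φ : Euc N → ℝ} (h : ContDiff ℝ (⊤ : ℕ∞) φ) : Continuous (gradient φ) := by
  unfold gradient
  exact (LinearIsometryEquiv.continuous _).comp (h.continuous_fderiv (by simp))

theorem aux_grad_cs {φ : Euc N → ℝ} (hc : HasCompactSupport φ) :
    HasCompactSupport (gradient φ) := by
  apply HasCompactSupport.intro hc
  intro x hx
  exact aux_grad_zero hx

theorem aux_ptw {a p q r d n : ℝ} (ha : 0 < a) (hn : n = a + 2) (hd : |d| ≤ q * r)
    :
    a / 2 * ((1 + r ^ 2)⁻¹ * p ^ 2) ≤ 2 / a * q ^ 2 +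
      (2 * p * d * (1 + r ^ 2)⁻¹ - p ^ 2 * (2 * r ^ 2 * (1 + r ^ 2)⁻¹ ^ 2)
        + n * (p ^ 2 * (1 + r ^ 2)⁻¹)) := by
  have hpos : 0 < 1 + r ^ 2 := by positivity
  set s := (1 + r ^ 2)⁻¹ with hs
  have hs0 : 0 < s := inv_pos.mpr hpos
  have hs1 : s * (1 + r ^ 2) = 1 := inv_mul_cancel₀ hpos.ne'
  have hrs : r ^ 2 * s ^ 2 = s - s ^ 2 := by
    linear_combination s * hs1
  have h1 : -(2 * p * d * s) ≤ 2 * (|p| * (q * r) * s) := by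
    have : -(p * d) ≤ |p| * (q * r) := by
      calc -(p*d) ≤ |p * d| := neg_le_abs _
        _ = |p| * |d| := abs_mul _ _
        _ ≤ _ := by gcongr
    nlinarith
  have h2 : 2 * (|p| * (q * r) * s) ≤ a / 2 * (p ^ 2 * (r ^ 2 * s ^ 2)) + 2 / a * q ^ 2 := by
    have e : a / 2 * (p ^ 2 * (r ^ 2 * s ^ 2)) + 2 / a * q ^ 2 - 2 * (|p| * (q * r) * s)
        = (a * (|p| * r * s) - 2 * q) ^ 2 / (2 * a) := by
      rw [← sq_abs p]; field_simp; ring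
    have : 0 ≤ (a * (|p| * r * s) - 2 * q) ^ 2 / (2 * a) := by positivity
    linarith
  have h3 : p ^ 2 * (2 * r ^ 2 * s ^ 2) ≤ p ^ 2 * (2 * s) := by
    apply mul_le_mul_of_nonneg_left _ (sq_nonneg p)
    nlinarith [sq_nonneg s]
  have h4 : a / 2 * (p ^ 2 * (r ^ 2 * s ^ 2)) ≤ a / 2 * (p ^ 2 * s) := by
    rw [hrs]
    apply mul_le_mul_of_nonneg_left _ (by positivity)
    apply mul_le_mul_of_nonneg_left _ (sq_nonneg p)
    nlinarith [sq_nonneg s]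
  subst hn
  nlinarith

theorem aux_hardy (hN : 3 ≤ N) {φ : Euc N → ℝ} (h : ContDiff ℝ (⊤ : ℕ∞) φ)
    (hc : HasCompactSupport φ) :
    ∫ x, (1 + ‖x‖ ^ 2)⁻¹ * φ x ^ 2 ≤ cN N ^ 2 * ∫ x, ‖gradient φ x‖ ^ 2 := by
  have hN' : (3 : ℝ) ≤ N := by exact_mod_cast hN
  set a : ℝ := N - 2 with ha
  have ha0 : 0 < a := by linarith
  have hpos : ∀ x : Euc N, 1 + ‖x‖ ^ 2 ≠ 0 := fun x => by positivity
  set ψ : Euc N → ℝ := fun x => φ x ^ 2 * (1 + ‖x‖ ^ 2)⁻¹ with hψ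
  have h1 : ContDiff ℝ 1 φ := h.of_le (by exact_mod_cast le_top)
  have hnsq : ContDiff ℝ 1 (fun x : Euc N => ‖x‖ ^ 2) := contDiff_norm_sq ℝ
  have hψ1 : ContDiff ℝ 1 ψ := by
    apply (h1.pow 2).mul
    exact (contDiff_const.add hnsq).inv hpos
  have hψc : HasCompactSupport ψ := by
    apply HasCompactSupport.intro hc
    intro x hx
    simp [hψ, image_eq_zero_of_notMem_tsupport hx]
  have hfd : ∀ x : Euc N, fderiv ℝ ψ x x = 2 * φ x * ⟪gradient φ x, x⟫ * (1 + ‖x‖ ^ 2)⁻¹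
      - φ x ^ 2 * (2 * ‖x‖ ^ 2 * (1 + ‖x‖ ^ 2)⁻¹ ^ 2) := by
    intro x
    have d1 : HasFDerivAt φ (fderiv ℝ φ x) x := (h1.differentiable (by norm_num) x).hasFDerivAt
    have d2 : HasFDerivAt (fun x : Euc N => ‖x‖ ^ 2) (2 • innerSL ℝ x) x :=
      (hasStrictFDerivAt_norm_sq x).hasFDerivAt
    have d3 := (d2.const_add 1)
    have d4 := (hasDerivAt_inv (hpos x)).comp_hasFDerivAt x d3
    have d5 := (d1.pow 2).mul d4
    have : HasFDerivAt ψ _ x := d5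
    rw [this.fderiv, inner_gradient_left]
    simp
    ring
  have hib := aux_ibp hψ1 hψc
  have hψi : Integrable ψ := hψ1.continuous.integrable_of_hasCompactSupport hψc
  have hdi : Integrable (fun x => fderiv ℝ ψ x x) := by
    apply Continuous.integrable_of_hasCompactSupport
    · have := hψ1.continuous_fderiv (by norm_num)
      fun_prop
    · apply (hψc.fderiv ℝ).mono
      intro x hx
      simp only [Function.mem_support] at hx ⊢
      intro h0
      simp [h0] at hx
  have hgi : Integrable (fun x => ‖gradient φ x‖ ^ 2) := by
    apply Continuous.integrable_of_hasCompactSupport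
    · have := aux_grad_cont h
      fun_prop
    · apply (aux_grad_cs hc).mono
      intro x hx
      simp only [Function.mem_support] at hx ⊢
      intro h0
      simp [h0] at hx
  have hli : Integrable (fun x : Euc N => (1 + ‖x‖ ^ 2)⁻¹ * φ x ^ 2) := by
    simpa only [hψ, mul_comm] using hψi
  have hmono : ∫ x, a / 2 * ((1 + ‖x‖ ^ 2)⁻¹ * φ x ^ 2) ≤
      ∫ x, (2 / a * ‖gradient φ x‖ ^ 2 + (fderiv ℝ ψ x x + N * ψ x)) := by
    apply integral_mono (hli.const_mul _) ((hgi.const_mul _).add (hdi.add (hψi.const_mul _)))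
    intro x
    have := aux_ptw (p := φ x) (n := N) ha0 (by rw [ha]; ring)
      (abs_real_inner_le_norm (gradient φ x) x)
    rw [← hfd x] at this
    exact this
  have hsum : Integrable (fun x => fderiv ℝ ψ x x + N * ψ x) := hdi.add (hψi.const_mul _)
  rw [integral_add (hgi.const_mul _) hsum,
    integral_add hdi (hψi.const_mul _), integral_const_mul, integral_const_mul,
    integral_const_mul, hib] at hmono
  have hcN : cN N = 2 / a := rfl
  rw [hcN]
  have : a / 2 * ∫ x, (1 + ‖x‖ ^ 2)⁻¹ * φ x ^ 2 ≤ 2 / a * ∫ x, ‖gradient φ x‖ ^ 2 := by linarith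
  have h6 := mul_le_mul_of_nonneg_left this (by positivity : 0 ≤ 2 / a)
  have e1 : 2 / a * (a / 2 * ∫ x, (1 + ‖x‖ ^ 2)⁻¹ * φ x ^ 2)
      = ∫ x, (1 + ‖x‖ ^ 2)⁻¹ * φ x ^ 2 := by field_simp
  rw [e1] at h6
  linarith

theorem aux_hardyΩ {Ω : Set (Euc N)} (hN : 3 ≤ N) {φ : Euc N → ℝ} (h : IsTest Ω φ) :
    sqL2 Ω (-1) φ ≤ cN N ^ 2 * ∫ x in Ω, ‖gradient φ x‖ ^ 2 := by
  obtain ⟨h1, h2, h3⟩ := h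
  have := aux_hardy hN h1 h2
  unfold sqL2
  rw [setIntegral_eq_integral_of_forall_compl_eq_zero (f := fun x => ‖gradient φ x‖ ^ 2),
    setIntegral_eq_integral_of_forall_compl_eq_zero]
  · simpa only [Real.rpow_neg_one] using this
  · intro x hx
    simp [image_eq_zero_of_notMem_tsupport (fun hh => hx (h3 hh))]
  · intro x hx
    simp [aux_grad_zero (fun hh => hx (h3 hh))]

/-- plain square integrability -/
def SqI (Ω : Set (Euc N)) (v : Euc N → Euc N) : Prop :=
  AEStronglyMeasurable v (volume.restrict Ω) ∧
    Integrable (fun x => ‖v x‖ ^ 2) (volume.restrict Ω)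

theorem aux_sqI {Ω : Set (Euc N)} {v : Euc N → Euc N} (h : MemL2V Ω 0 v) : SqI Ω v := by
  refine ⟨h.1, ?_⟩
  simpa using h.2

theorem SqI.lp {Ω : Set (Euc N)} {v : Euc N → Euc N} (h : SqI Ω v) :
    MemLp v 2 (volume.restrict Ω) := (memLp_two_iff_integrable_sq_norm h.1).2 h.2

theorem SqI.sub {Ω : Set (Euc N)} {v w : Euc N → Euc N} (h : SqI Ω v) (h' : SqI Ω w) :
    SqI Ω (fun x => v x - w x) :=
  ⟨h.1.sub h'.1, (memLp_two_iff_integrable_sq_norm (h.1.sub h'.1)).1 (h.lp.sub h'.lp)⟩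

theorem SqI.inner {Ω : Set (Euc N)} {v w : Euc N → Euc N} (h : SqI Ω v) (h' : SqI Ω w) :
    Integrable (fun x => ⟪v x, w x⟫) (volume.restrict Ω) := by
  refine (h.2.add h'.2).mono' (h.1.inner h'.1) (Eventually.of_forall fun x => ?_)
  have := abs_real_inner_le_norm (v x) (w x)
  simp only [Real.norm_eq_abs, Pi.add_apply]
  nlinarith [sq_nonneg (‖v x‖ - ‖w x‖), sq_nonneg (‖v x‖), sq_nonneg (‖w x‖)]

theorem SqI.grad {Ω : Set (Euc N)} {φ : Euc N → ℝ} (h : IsTest Ω φ) : SqI Ω (gradient φ) := by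
  have hc := aux_grad_cont h.1
  refine ⟨hc.aestronglyMeasurable, Integrable.restrict ?_⟩
  apply Continuous.integrable_of_hasCompactSupport
  · fun_prop
  · apply (aux_grad_cs h.2.1).mono
    intro x hx
    simp only [Function.mem_support] at hx ⊢
    intro h0
    simp [h0] at hx

theorem SqI.A {Ω : Set (Euc N)} (M : Coeff N Ω) {v : Euc N → Euc N} (h : SqI Ω v) :
    SqI Ω (fun x => M.A x (v x)) := by
  have hm : AEStronglyMeasurable (fun x => M.A x (v x)) (volume.restrict Ω) := by
    have e : (fun x => M.A x (v x))
        = fun x => ∑ i, (v x) i • M.A x (EuclideanSpace.single i 1 : Euc N) := by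
      ext1 x
      have hx : v x = ∑ i, (v x) i • (EuclideanSpace.single i 1 : Euc N) := by
        have := (EuclideanSpace.basisFun (Fin N) ℝ).sum_repr (v x)
        simpa using this.symm
      conv_lhs => rw [hx]
      rw [map_sum]
      simp only [map_smul]
    rw [e]
    apply Finset.aestronglyMeasurable_fun_sum
    intro i _
    have : Continuous (fun y : Euc N => y i) := by fun_prop
    exact (this.comp_aestronglyMeasurable h.1).smul (M.meas _)
  refine ⟨hm, ?_⟩
  obtain ⟨C, hC⟩ := M.bdd
  refine (h.2.const_mul (C ^ 2)).mono' (hm.norm.pow 2) ?_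
  filter_upwards [hC] with x hx
  have := hx (v x)
  rw [Real.norm_of_nonneg (by positivity), ← mul_pow]
  gcongr

theorem aux_tendsto {Ω : Set (Euc N)} {h g : Euc N → Euc N} {φ : ℕ → Euc N → ℝ}
    (hh : SqI Ω h) (hg : SqI Ω g) (hφ : ∀ n, IsTest Ω (φ n))
    (ht : Tendsto (fun n => ∫ x in Ω, ‖g x - gradient (φ n) x‖ ^ 2) atTop (𝓝 0)) :
    Tendsto (fun n => ∫ x in Ω, ⟪h x, gradient (φ n) x⟫) atTop (𝓝 (∫ x in Ω, ⟪h x, g x⟫)) := by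
  have hd : ∀ n, (∫ x in Ω, ⟪h x, gradient (φ n) x⟫) =
      (∫ x in Ω, ⟪h x, g x⟫) - ∫ x in Ω, ⟪h x, g x - gradient (φ n) x⟫ := by
    intro n
    rw [← integral_sub (hh.inner hg) (hh.inner (hg.sub (SqI.grad (hφ n))))]
    congr 1; ext x
    rw [inner_sub_right]; ring
  have hz : Tendsto (fun n => ∫ x in Ω, ⟪h x, g x - gradient (φ n) x⟫) atTop (𝓝 0) := by
    have hs : Tendsto (fun n => (∫ x in Ω, ⟪h x, g x - gradient (φ n) x⟫) ^ 2) atTop (𝓝 0) := by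
      refine squeeze_zero (fun n => sq_nonneg _) (fun n => ?_)
        (by simpa using ht.const_mul (∫ x in Ω, ‖h x‖ ^ 2))
      have hgn := hg.sub (SqI.grad (hφ n))
      refine aux_cs_s8 hh.2 hgn.2 (hh.inner hgn) (Eventually.of_forall fun x t => ?_)
      have e := norm_add_sq_real (t • h x) (g x - gradient (φ n) x)
      rw [norm_smul, real_inner_smul_left, mul_pow, Real.norm_eq_abs, sq_abs] at e
      nlinarith [sq_nonneg ‖t • h x + (g x - gradient (φ n) x)‖]
    have := (Real.continuous_sqrt.tendsto _).comp hs
    simp only [Real.sqrt_zero, Function.comp_def, Real.sqrt_sq_eq_abs] at this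
    exact (tendsto_zero_iff_abs_tendsto_zero _).2 this
  simp_rw [hd]
  simpa using tendsto_const_nhds.sub hz

/-- Quadratic form of the majorant:
`‖∇e‖²_A ≤ c_{N,α}²(1+1/β)‖f + div v‖²_{L²₊₁} + (1+β)‖∇ũ − A⁻¹v‖²_A`. -/
theorem stmt_8 (Ω : Set (Euc N)) (hΩ : IsOpen Ω) (hN : 3 ≤ N) (M : Coeff N Ω)
    (f : Euc N → ℝ) (hf : MemL2 Ω 1 f)
    (uh : Euc N → ℝ) (gu : Euc N → Euc N)
    (huh : MemL2 Ω (-1) uh) (hgu : MemL2V Ω 0 gu) (hguw : IsWeakGrad Ω uh gu)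
    (hweak : ∀ φ : Euc N → ℝ, IsTest Ω φ →
      (∫ x in Ω, ⟪M.A x (gu x), gradient φ x⟫) = ∫ x in Ω, f x * φ x)
    (ut : Euc N → ℝ) (gt : Euc N → Euc N)
    (hut : MemL2 Ω (-1) ut) (hgt : MemL2V Ω 0 gt) (hgtw : IsWeakGrad Ω ut gt)
    (he : MemH10 Ω (fun x => uh x - ut x) (fun x => gu x - gt x)) :
    ∀ β : ℝ, 0 < β →
    ∀ (v : Euc N → Euc N) (dv : Euc N → ℝ) (w : Euc N → Euc N),
      MemL2V Ω 0 v → MemL2 Ω 1 dv → IsWeakDiv Ω v dv → IsAInv Ω M.A v w →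
      sqA Ω M.A (fun x => gu x - gt x) ≤
        (M.α * cN N) ^ 2 * (1 + 1 / β) * sqL2 Ω 1 (fun x => f x + dv x) +
          (1 + β) * sqA Ω M.A (fun x => gt x - w x) := by
  intro β hβ v dv w hv hdv hdiv hw
  obtain ⟨-, hg0, -, φ, hφ, -, hφt⟩ := he
  have hg := aux_sqI hg0
  have hgu' := aux_sqI hgu
  have hgt' := aux_sqI hgt
  have hv' := aux_sqI hv
  have hw' := aux_sqI hw.1
  set g : Euc N → Euc N := fun x => gu x - gt x with hgdef
  -- convergence of squared norms
  have ht : Tendsto (fun n => ∫ x in Ω, ‖g x - gradient (φ n) x‖ ^ 2) atTop (𝓝 0) := by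
    have := hφt.pow 2
    simp only [nrmL2V, sqL2V, Real.rpow_zero, one_mul] at this
    have e : ∀ n, √(∫ x in Ω, ‖g x - gradient (φ n) x‖ ^ 2) ^ 2
        = ∫ x in Ω, ‖g x - gradient (φ n) x‖ ^ 2 := fun n =>
      Real.sq_sqrt (integral_nonneg fun x => by positivity)
    simpa [e] using this
  set h : Euc N → Euc N := fun x => M.A x (gu x) - v x with hhdef
  have hAgu := SqI.A M hgu'
  have hh : SqI Ω h := hAgu.sub hv'
  have hAg := SqI.A M hg
  set S := sqA Ω M.A g with hS
  set G := sqA Ω M.A (fun x => gt x - w x) with hG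
  set F := sqL2 Ω 1 (fun x => f x + dv x) with hF
  have hgtw' := hgt'.sub hw'
  have hAgtw := SqI.A M hgtw'
  set T1 := ∫ x in Ω, ⟪h x, g x⟫ with hT1
  set T2 := ∫ x in Ω, ⟪M.A x (gt x - w x), g x⟫ with hT2
  have hsplit : S = T1 - T2 := by
    rw [hT1, hT2, ← integral_sub (hh.inner hg) (hAgtw.inner hg)]
    simp only [hS, sqA, ipA]
    apply integral_congr_ae
    filter_upwards [hw.2] with x hx
    rw [← inner_sub_left]
    simp only [hhdef, hgdef, map_sub, ← hx]
    congr 1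
    abel
  have hcoer := M.coer
  have hαp := M.α_pos
  have hnn : ∀ᵐ x ∂(volume.restrict Ω), ∀ ξ : Euc N, 0 ≤ ⟪M.A x ξ, ξ⟫ := by
    filter_upwards [hcoer] with x hx ξ
    exact le_trans (by positivity) (hx ξ)
  have hS0 : 0 ≤ S := integral_nonneg_of_ae (by filter_upwards [hnn] with x hx using hx _)
  have hG0 : 0 ≤ G := integral_nonneg_of_ae (by filter_upwards [hnn] with x hx using hx _)
  have hF0 : 0 ≤ F := integral_nonneg fun x => by positivity
  -- second term
  have hB2 : T2 ^ 2 ≤ G * S := by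
    refine aux_cs_s8 (hAgtw.inner hgtw') (hAg.inner hg) (hAgtw.inner hg) ?_
    filter_upwards [hnn] with x hx t
    have := hx (t • (gt x - w x) + g x)
    rw [map_add, map_smul, inner_add_left, inner_add_right, inner_add_right, real_inner_smul_left,
      real_inner_smul_left, real_inner_smul_right, real_inner_smul_right] at this
    have e : ⟪M.A x (g x), gt x - w x⟫ = ⟪M.A x (gt x - w x), g x⟫ := by
      rw [M.symm, real_inner_comm]
    rw [e] at this
    linarith
  -- weighted integrability
  have hpos : ∀ x : Euc N, 0 < 1 + ‖x‖ ^ 2 := fun x => by positivity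
  have hmulI : ∀ (k : Euc N → ℝ) (ψ : Euc N → ℝ), MemL2 Ω 1 k → IsTest Ω ψ →
      Integrable (fun x => k x * ψ x) (volume.restrict Ω) ∧
      Integrable (fun x => (1 + ‖x‖ ^ 2) ^ (-1 : ℝ) * ψ x ^ 2) (volume.restrict Ω) := by
    intro k ψ hk hψ
    have hψc := hψ.1.continuous
    have h2 : Integrable (fun x => (1 + ‖x‖ ^ 2) ^ (-1 : ℝ) * ψ x ^ 2) (volume.restrict Ω) := by
      apply Integrable.restrict
      simp only [Real.rpow_neg_one]
      apply Continuous.integrable_of_hasCompactSupport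
      · have : Continuous fun x : Euc N => (1 + ‖x‖ ^ 2)⁻¹ :=
          Continuous.inv₀ (by fun_prop) (fun x => (hpos x).ne')
        fun_prop
      · apply hψ.2.1.mono
        intro x hx
        simp only [Function.mem_support] at hx ⊢
        intro h0
        simp [h0] at hx
    refine ⟨?_, h2⟩
    refine (hk.2.add h2).mono' (hk.1.mul hψc.aestronglyMeasurable)
      (Eventually.of_forall fun x => ?_)
    simp only [Real.rpow_neg_one, Real.rpow_one, Pi.add_apply, Real.norm_eq_abs]
    have hp := hpos x
    set a := 1 + ‖x‖ ^ 2
    have e1 : a * k x ^ 2 + a⁻¹ * ψ x ^ 2 - 2 * (k x * ψ x) = (a * k x - ψ x) ^ 2 / a := by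
      field_simp
      ring
    have e2 : a * k x ^ 2 + a⁻¹ * ψ x ^ 2 + 2 * (k x * ψ x) = (a * k x + ψ x) ^ 2 / a := by
      field_simp
      ring
    have p1 : 0 ≤ (a * k x - ψ x) ^ 2 / a := by positivity
    have p2 : 0 ≤ (a * k x + ψ x) ^ 2 / a := by positivity
    have p3 : 0 ≤ a * k x ^ 2 + a⁻¹ * ψ x ^ 2 := by positivity
    rw [abs_le]
    constructor <;> linarith
  have hfd : MemL2 Ω 1 (fun x => f x + dv x) := by
    refine ⟨hf.1.add hdv.1, ?_⟩
    refine ((hf.2.const_mul 2).add (hdv.2.const_mul 2)).mono' ?_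
      (Eventually.of_forall fun x => ?_)
    · refine AEStronglyMeasurable.mul ?_ ((hf.1.add hdv.1).pow 2)
      have : Continuous (fun x : Euc N => (1 + ‖x‖ ^ 2) ^ (1 : ℝ)) := by
        simp only [Real.rpow_one]; fun_prop
      exact this.aestronglyMeasurable
    · rw [Real.norm_of_nonneg (by positivity)]
      simp only [Real.rpow_one, Pi.add_apply]
      nlinarith [mul_nonneg (hpos x).le (sq_nonneg (f x - dv x))]
  -- first term along the sequence
  have hBn : ∀ n, (∫ x in Ω, ⟪h x, gradient (φ n) x⟫) ^ 2 ≤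
      F * (cN N ^ 2 * ∫ x in Ω, ‖gradient (φ n) x‖ ^ 2) := by
    intro n
    have hφn := SqI.grad (hφ n)
    have e : (∫ x in Ω, ⟪h x, gradient (φ n) x⟫) = ∫ x in Ω, (f x + dv x) * φ n x := by
      simp only [hhdef, inner_sub_left, add_mul]
      rw [integral_sub (hAgu.inner hφn) (hv'.inner hφn), hweak _ (hφ n), hdiv _ (hφ n),
        integral_add (hmulI _ _ hf (hφ n)).1 (hmulI _ _ hdv (hφ n)).1]
      ring
    rw [e]
    refine le_trans ?_ (mul_le_mul_of_nonneg_left (aux_hardyΩ hN (hφ n)) hF0)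
    obtain ⟨i1, i2⟩ := hmulI _ _ hfd (hφ n)
    refine aux_cs_s8 hfd.2 i2 i1 (Eventually.of_forall fun x t => ?_)
    simp only [Real.rpow_neg_one, Real.rpow_one]
    have hp := hpos x
    set a := 1 + ‖x‖ ^ 2
    have e1 : a * (f x + dv x) ^ 2 * (t * t) + 2 * ((f x + dv x) * φ n x) * t + a⁻¹ * φ n x ^ 2
        = (a * (f x + dv x) * t + φ n x) ^ 2 / a := by
      field_simp
      ring
    rw [e1]
    positivity
  have hlim1 := aux_tendsto hh hg hφ ht
  have hlim2 : Tendsto (fun n => ∫ x in Ω, ‖gradient (φ n) x‖ ^ 2) atTop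
      (𝓝 (∫ x in Ω, ‖g x‖ ^ 2)) := by
    have hl := aux_tendsto hg hg hφ ht
    have e : ∀ n, (∫ x in Ω, ‖gradient (φ n) x‖ ^ 2) =
        (∫ x in Ω, ‖g x - gradient (φ n) x‖ ^ 2) + 2 * (∫ x in Ω, ⟪g x, gradient (φ n) x⟫)
          - ∫ x in Ω, ‖g x‖ ^ 2 := by
      intro n
      have hφn := SqI.grad (hφ n)
      have i1 := (hg.sub hφn).2
      have i2 := (hg.inner hφn).const_mul 2
      have i3 : Integrable (fun x => ‖g x - gradient (φ n) x‖ ^ 2 + 2 * ⟪g x, gradient (φ n) x⟫)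
        (volume.restrict Ω) := i1.add i2
      rw [← integral_const_mul, ← integral_add i1 i2, ← integral_sub i3 hg.2]
      congr 1; ext x
      rw [norm_sub_sq_real]; ring
    simp_rw [e]
    have hl2 := (ht.add (hl.const_mul 2)).sub_const (∫ x in Ω, ‖g x‖ ^ 2)
    simp only [real_inner_self_eq_norm_sq] at hl2
    convert hl2 using 2
    ring
  have hB1' : T1 ^ 2 ≤ F * (cN N ^ 2 * ∫ x in Ω, ‖g x‖ ^ 2) :=
    le_of_tendsto_of_tendsto' (hlim1.pow 2) ((hlim2.const_mul _).const_mul _) hBn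
  have hco : (∫ x in Ω, ‖g x‖ ^ 2) ≤ M.α ^ 2 * S := by
    rw [hS, sqA, ipA, ← integral_const_mul]
    apply integral_mono_ae hg.2 ((hAg.inner hg).const_mul _)
    filter_upwards [hcoer] with x hx
    have := mul_le_mul_of_nonneg_left (hx (g x)) (sq_nonneg M.α)
    rw [← mul_assoc, ← mul_pow, mul_inv_cancel₀ hαp.ne', one_pow, one_mul] at this
    exact this
  have hB1 : T1 ^ 2 ≤ (M.α * cN N) ^ 2 * F * S := by
    refine hB1'.trans ?_
    calc F * (cN N ^ 2 * ∫ x in Ω, ‖g x‖ ^ 2) ≤ F * (cN N ^ 2 * (M.α ^ 2 * S)) := by gcongr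
      _ = _ := by ring
  have hyoung : S ^ 2 ≤ (1 + 1 / β) * T1 ^ 2 + (1 + β) * T2 ^ 2 := by
    have e : (1 + 1 / β) * T1 ^ 2 + (1 + β) * T2 ^ 2 - S ^ 2 = (T1 + β * T2) ^ 2 / β := by
      rw [hsplit]; field_simp; ring
    have : 0 ≤ (T1 + β * T2) ^ 2 / β := by positivity
    linarith
  have hfin : S ^ 2 ≤ S * ((M.α * cN N) ^ 2 * (1 + 1 / β) * F + (1 + β) * G) := by
    have b1 := mul_le_mul_of_nonneg_left hB1 (by positivity : 0 ≤ 1 + 1 / β)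
    have b2 := mul_le_mul_of_nonneg_left hB2 (by positivity : 0 ≤ 1 + β)
    calc S ^ 2 ≤ _ := hyoung
      _ ≤ _ := add_le_add b1 b2
      _ = _ := by ring
  rcases hS0.eq_or_lt with h0 | h0
  · rw [← h0]; positivity
  · rw [sq] at hfin
    exact le_of_mul_le_mul_left hfin h0
end
end
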